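/- arXiv:2503.06673 — 2 statements merged into one kernel-verified Lean document; each statement's English description precedes it below -/
import Mathlib

section
/- Let (X,d) be a proper geodesic metric space of finite covering dimension that admits a ccc geodesic bicombing σ and a cocompact action of some group G by isometries. If there exist two σ-rays in X that are not asymptotic, then X is almost σ-geodesically complete: there exist a point o ∈ X and a constant C ≥ 0 such that for every x ∈ X there is a σ-ray ξ with ξ(0) = o whose image meets the closed ball of radius C around x. -/
open Metric Set
open scoped Pointwise

variable {X : Type*} [MetricSpace X]

/-- A geodesic bicombing on a metric space: a continuous choice of constant-speed
geodesics, parametrized on `[0,1]`. -/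
def IsGeodesicBicombing (σ : X → X → ℝ → X) : Prop :=
  ContinuousOn (fun p : X × X × ℝ => σ p.1 p.2.1 p.2.2)
    {p : X × X × ℝ | p.2.2 ∈ Set.Icc (0 : ℝ) 1} ∧
  (∀ x y : X, σ x y 0 = x) ∧
  (∀ x y : X, σ x y 1 = y) ∧
  (∀ x y : X, ∀ s ∈ Set.Icc (0 : ℝ) 1, ∀ t ∈ Set.Icc (0 : ℝ) 1,
    dist (σ x y s) (σ x y t) = |s - t| * dist x y)

/-- A bicombing is conical. -/
def IsConical (σ : X → X → ℝ → X) : Prop :=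
  ∀ x y x' y' : X, ∀ t ∈ Set.Icc (0 : ℝ) 1,
    dist (σ x y t) (σ x' y' t) ≤ (1 - t) * dist x x' + t * dist y y'

/-- A bicombing is consistent. -/
def IsConsistent (σ : X → X → ℝ → X) : Prop :=
  ∀ x y : X, ∀ s t l : ℝ, 0 ≤ s → s ≤ t → t ≤ 1 → l ∈ Set.Icc (0 : ℝ) 1 →
    σ (σ x y s) (σ x y t) l = σ x y ((1 - l) * s + l * t)

/-- A ccc bicombing: a geodesic bicombing that is consistent and conical. -/
def IsCCC (σ : X → X → ℝ → X) : Prop :=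
  IsGeodesicBicombing σ ∧ IsConsistent σ ∧ IsConical σ

/-- A `σ`-ray: a unit-speed geodesic ray compatible with the bicombing `σ`
(encoded as a map on `ℝ` which is constant on `(-∞,0]`). -/
def IsRay (σ : X → X → ℝ → X) (ξ : ℝ → X) : Prop :=
  (∀ t : ℝ, t ≤ 0 → ξ t = ξ 0) ∧
  (∀ s t : ℝ, 0 ≤ s → 0 ≤ t → dist (ξ s) (ξ t) = |s - t|) ∧
  (∀ t : ℝ, 0 ≤ t → ∀ s ∈ Set.Icc (0 : ℝ) 1, σ (ξ 0) (ξ t) s = ξ (s * t))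

/-- Two rays are asymptotic: their distance at time `t` is uniformly bounded for `t ≥ 0`. -/
def Asymptotic (ξ ζ : ℝ → X) : Prop :=
  ∃ M : ℝ, ∀ t : ℝ, 0 ≤ t → dist (ξ t) (ζ t) ≤ M

/-- A geodesic metric space: every pair of points is joined by a (constant-speed) geodesic. -/
def IsGeodesicSpace (X : Type*) [MetricSpace X] : Prop :=
  ∀ x y : X, ∃ γ : ℝ → X, γ 0 = x ∧ γ 1 = y ∧
    ∀ s ∈ Set.Icc (0 : ℝ) 1, ∀ t ∈ Set.Icc (0 : ℝ) 1,
      dist (γ s) (γ t) = |s - t| * dist x y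

/-- Finite covering dimension: there is `n` such that every open cover has an open
refinement in which each point belongs to at most `n + 1` members. -/
def FiniteCoveringDimension (X : Type*) [TopologicalSpace X] : Prop :=
  ∃ n : ℕ, ∀ 𝒰 : Set (Set X), (∀ U ∈ 𝒰, IsOpen U) → ⋃₀ 𝒰 = Set.univ →
    ∃ 𝒱 : Set (Set X), (∀ V ∈ 𝒱, IsOpen V) ∧ ⋃₀ 𝒱 = Set.univ ∧
      (∀ V ∈ 𝒱, ∃ U ∈ 𝒰, V ⊆ U) ∧
      ∀ x : X, {V | V ∈ 𝒱 ∧ x ∈ V}.Finite ∧ Nat.card {V | V ∈ 𝒱 ∧ x ∈ V} ≤ n + 1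

/-!
Suppose that no constant works. Then there are points `o` and `x` such that no `σ`-ray from `o`
comes close to `x`; by properness, the `σ`-geodesics from `o` to all points far from `x` stay far
from `x` as well, since they would otherwise accumulate at such a ray. Truncating these geodesics
gives a Lipschitz contraction of `X` to `o` that keeps the complement of a large ball around `x`
away from `x`, and cocompactness provides such contractions around every point, uniformly. By the
prism formula, the coarse cohomology of `X` therefore vanishes, with uniform control of supports.

A cover of finite multiplicity discretizes `X` to a locally finite net `A`. Filling simplices of
`A` by fine chains along `σ`-geodesics and pushing these back to `A` gives an
augmentation-preserving controlled chain map of the complex of all simplices of `A`, whose square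
vanishes on simplices with many vertices. The vanishing of coarse cohomology then yields, by
descending induction on the number of vertices, a controlled null-homotopy of such a chain map on
all nonempty simplices. This contradicts the preservation of the augmentation.
-/

section FinsuppMap

open Finsupp

variable {R α M : Type*} [Semiring R] [AddCommMonoid M] [Module R M]

lemma map_mem_of_mem_supported (T : (α →₀ R) →ₗ[R] M) {Z : Set α} {N : Submodule R M}
    (h : ∀ s ∈ Z, T (single s 1) ∈ N) {x : α →₀ R} (hx : x ∈ supported R R Z) : T x ∈ N := by
  rw [supported_eq_span_single] at hx
  have hspan : Submodule.span R ((fun s => single s (1 : R)) '' Z) ≤ N.comap T :=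
    Submodule.span_le.2 (Set.image_subset_iff.2 h)
  exact hspan hx

lemma map_eq_of_mem_supported {T T' : (α →₀ R) →ₗ[R] M} {Z : Set α}
    (h : ∀ s ∈ Z, T (single s 1) = T' (single s 1)) {x : α →₀ R} (hx : x ∈ supported R R Z) :
    T x = T' x := by
  rw [supported_eq_span_single] at hx
  exact LinearMap.eqOn_span (Set.forall_mem_image.2 h) hx

lemma map_ext_single {T T' : (α →₀ R) →ₗ[R] M} (h : ∀ s, T (single s 1) = T' (single s 1)) :
    T = T' :=
  lhom_ext' fun s => LinearMap.ext_ring (h s)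

lemma exists_map_single_ne_zero (T : (α →₀ R) →ₗ[R] M) {x : α →₀ R} (hx : T x ≠ 0) :
    ∃ s ∈ x.support, T (single s 1) ≠ 0 := by
  by_contra! h
  exact hx (map_eq_of_mem_supported (T' := 0) h (mem_supported_support R x))

end FinsuppMap

/-- Augmented ordered chains: formal combinations of lists of vertices, repetitions allowed.
The empty list is the simplex of degree `-1`. -/
abbrev OrderedChain (R α : Type*) [Semiring R] := List α →₀ R

namespace OrderedChain

open Finsupp

variable {R α β : Type*} [Ring R]

/-- The cone with apex `a`. -/
noncomputable def cone (a : α) : OrderedChain R α →ₗ[R] OrderedChain R α :=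
  lmapDomain R R (List.cons a)

@[simp] lemma cone_single (a : α) (l : List α) (c : R) :
    cone a (single l c) = single (a :: l) c :=
  mapDomain_single

/-- The chain map induced by a map of vertices. -/
noncomputable def map (f : α → β) : OrderedChain R α →ₗ[R] OrderedChain R β :=
  lmapDomain R R (List.map f)

@[simp] lemma map_single (f : α → β) (l : List α) (c : R) :
    map f (single l c) = single (l.map f) c :=
  mapDomain_single

lemma map_id (x : OrderedChain R α) : map id x = x := by
  simp [map]

lemma map_cone (f : α → β) (a : α) (x : OrderedChain R α) :
    map f (cone a x) = cone (f a) (map f x) :=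
  LinearMap.congr_fun (map_ext_single (T := map f ∘ₗ cone a) (T' := cone (f a) ∘ₗ map f)
    fun l => by simp) x

/-- The alternating sum of the faces of a simplex. -/
noncomputable def simplexBoundary : List α → OrderedChain R α
  | [] => 0
  | a :: l => single l 1 - cone a (simplexBoundary l)

/-- The boundary operator of the augmented ordered chain complex. -/
noncomputable def boundary : OrderedChain R α →ₗ[R] OrderedChain R α :=
  linearCombination R simplexBoundary

lemma boundary_single (l : List α) :
    boundary (single l (1 : R)) = simplexBoundary l := by
  simp [boundary]

@[simp] lemma boundary_single_nil : boundary (single ([] : List α) (1 : R)) = 0 := by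
  rw [boundary_single, simplexBoundary]

lemma boundary_cone (a : α) (x : OrderedChain R α) :
    boundary (cone a x) = x - cone a (boundary x) :=
  LinearMap.congr_fun (map_ext_single (T := boundary ∘ₗ cone a)
    (T' := LinearMap.id - cone a ∘ₗ boundary) fun l => by
      simp [boundary_single, simplexBoundary]) x

lemma boundary_map (f : α → β) (x : OrderedChain R α) :
    boundary (map f x) = map f (boundary x) := by
  refine LinearMap.congr_fun (map_ext_single (T := boundary ∘ₗ map f)
    (T' := map f ∘ₗ boundary) fun l => ?_) x
  induction l with
  | nil => simp
  | cons a l ih =>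
    simp only [LinearMap.comp_apply] at ih ⊢
    rw [← cone_single, map_cone, boundary_cone, ih, boundary_cone, map_sub, map_cone]

/-- The chain of one `f`-to-`g` prism over a simplex. -/
noncomputable def simplexPrism (f g : α → β) : List α → OrderedChain R β
  | [] => 0
  | a :: l => single (f a :: g a :: l.map g) 1 - cone (f a) (simplexPrism f g l)

/-- The prism operator, a chain homotopy from `map f` to `map g`. -/
noncomputable def prism (f g : α → β) : OrderedChain R α →ₗ[R] OrderedChain R β :=
  linearCombination R (simplexPrism f g)

lemma prism_single (f g : α → β) (l : List α) :
    prism f g (single l (1 : R)) = simplexPrism f g l := by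
  simp [prism]

lemma prism_cone (f g : α → β) (a : α) (x : OrderedChain R α) :
    prism f g (cone a x) = cone (f a) (cone (g a) (map g x)) - cone (f a) (prism f g x) :=
  LinearMap.congr_fun (map_ext_single (T := prism f g ∘ₗ cone a)
    (T' := cone (f a) ∘ₗ cone (g a) ∘ₗ map g - cone (f a) ∘ₗ prism f g) fun l => by
      simp [prism_single, simplexPrism]) x

lemma boundary_prism_add_prism_boundary (f g : α → β) (x : OrderedChain R α) :
    boundary (prism f g x) + prism f g (boundary x) = map g x - map f x := by
  refine LinearMap.congr_fun (map_ext_single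
    (T := boundary ∘ₗ prism f g + prism f g ∘ₗ boundary) (T' := map g - map f) fun l => ?_) x
  induction l with
  | nil => simp [prism_single, simplexPrism]
  | cons a l ih =>
    simp only [LinearMap.add_apply, LinearMap.comp_apply, LinearMap.sub_apply] at ih ⊢
    have h := eq_sub_of_add_eq' ih
    rw [← cone_single]
    simp only [prism_cone, boundary_cone, boundary_map, map_cone, map_sub, h]
    abel

/-- `l'` has the size of a top simplex of the prism over `l` with bottom `f` and top `g`, and its
vertices are vertices of that prism. -/
def IsPrismSimplex (f g : α → β) (l : List α) (l' : List β) : Prop :=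
  l'.length = l.length + 1 ∧ ∀ x' ∈ l', ∃ x ∈ l, x' = f x ∨ x' = g x

lemma IsPrismSimplex.top (f g : α → β) (a : α) (l : List α) :
    IsPrismSimplex f g (a :: l) (f a :: g a :: l.map g) := by
  refine ⟨by simp, ?_⟩
  simp only [List.mem_cons, List.mem_map]
  rintro x' (rfl | rfl | ⟨x, hx, rfl⟩)
  exacts [⟨a, .inl rfl, .inl rfl⟩, ⟨a, .inl rfl, .inr rfl⟩, ⟨x, .inr hx, .inr rfl⟩]

lemma IsPrismSimplex.cons {f g : α → β} {l : List α} {l' : List β}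
    (h : IsPrismSimplex f g l l') (a : α) : IsPrismSimplex f g (a :: l) (f a :: l') := by
  obtain ⟨hlength, hvertex⟩ := h
  refine ⟨by simp [hlength], fun x' hx' => ?_⟩
  rcases List.mem_cons.1 hx' with rfl | hx'
  · exact ⟨a, List.mem_cons_self, .inl rfl⟩
  · obtain ⟨x, hx, h⟩ := hvertex x' hx'
    exact ⟨x, List.mem_cons_of_mem a hx, h⟩

lemma prism_single_mem_supported (f g : α → β) (l : List α) :
    prism f g (single l (1 : R)) ∈ supported R R {l' | IsPrismSimplex f g l l'} := by
  rw [prism_single]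
  induction l with
  | nil => exact Submodule.zero_mem _
  | cons a l ih =>
    refine Submodule.sub_mem _ (single_mem_supported _ _ (.top f g a l)) ?_
    refine map_mem_of_mem_supported (cone (f a)) (fun l' hl' => ?_) ih
    rw [cone_single]
    exact single_mem_supported _ _ (hl'.cons a)

/-- The chain homotopy from `map (h 0)` to `map (h N)` through the intermediate maps `h i`. -/
noncomputable def iteratedPrism (h : ℕ → α → β) (N : ℕ) :
    OrderedChain R α →ₗ[R] OrderedChain R β :=
  ∑ i ∈ Finset.range N, prism (h i) (h (i + 1))

lemma boundary_iteratedPrism_add_iteratedPrism_boundary (h : ℕ → α → β) (N : ℕ)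
    (x : OrderedChain R α) :
    boundary (iteratedPrism h N x) + iteratedPrism h N (boundary x) =
      map (h N) x - map (h 0) x := by
  rw [← Finset.sum_range_sub (fun i => map (h i) x) N]
  simp only [iteratedPrism, LinearMap.sum_apply, map_sum]
  rw [← Finset.sum_add_distrib]
  exact Finset.sum_congr rfl fun i _ => boundary_prism_add_prism_boundary _ _ _

lemma iteratedPrism_single_mem_supported (h : ℕ → α → β) (N : ℕ) (l : List α) :
    iteratedPrism h N (single l (1 : R)) ∈
      supported R R {l' | ∃ i < N, IsPrismSimplex (h i) (h (i + 1)) l l'} := by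
  simp only [iteratedPrism, LinearMap.sum_apply]
  refine Submodule.sum_mem _ fun i hi => ?_
  have hsubset : {l' | IsPrismSimplex (h i) (h (i + 1)) l l'} ⊆
      {l' | ∃ i < N, IsPrismSimplex (h i) (h (i + 1)) l l'} :=
    fun l' hl' => ⟨i, Finset.mem_range.1 hi, hl'⟩
  exact supported_mono hsubset (prism_single_mem_supported (h i) (h (i + 1)) l)

end OrderedChain

/-- Augmented simplicial chains modulo 2; the empty simplex has degree `-1`. Working modulo 2
avoids orientations. -/
abbrev SimplicialChain (α : Type*) := Finset α →₀ ZMod 2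

namespace SimplicialChain

open Finsupp

variable {α β : Type*} [DecidableEq α]

/-- The cone with apex `a`, which is zero on the simplices containing `a`. -/
noncomputable def cone (a : α) : SimplicialChain α →ₗ[ZMod 2] SimplicialChain α :=
  linearCombination (ZMod 2) fun s => if a ∈ s then 0 else single (insert a s) 1

/-- The boundary operator of the augmented simplicial chain complex. -/
noncomputable def boundary : SimplicialChain α →ₗ[ZMod 2] SimplicialChain α :=
  linearCombination (ZMod 2) fun s => ∑ a ∈ s, single (s.erase a) 1

lemma cone_single (a : α) (s : Finset α) :
    cone a (single s 1) = if a ∈ s then 0 else single (insert a s) 1 := by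
  simp [cone]

lemma boundary_single (s : Finset α) :
    boundary (single s 1) = ∑ a ∈ s, single (s.erase a) 1 := by
  simp [boundary]

lemma cone_boundary_single_of_mem {a : α} {s : Finset α} (ha : a ∈ s) :
    cone a (boundary (single s 1)) = single s 1 := by
  rw [boundary_single, map_sum, Finset.sum_eq_single_of_mem a ha]
  · simp [cone_single, Finset.insert_erase ha]
  · intro b _ hba
    rw [cone_single, if_pos (Finset.mem_erase.2 ⟨hba.symm, ha⟩)]

lemma boundary_cone (a : α) (x : SimplicialChain α) :
    boundary (cone a x) = x + cone a (boundary x) := by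
  refine LinearMap.congr_fun (map_ext_single (T := boundary ∘ₗ cone a)
    (T' := LinearMap.id + cone a ∘ₗ boundary) fun s => ?_) x
  simp only [LinearMap.comp_apply, LinearMap.add_apply, LinearMap.id_apply]
  by_cases ha : a ∈ s
  · rw [cone_boundary_single_of_mem ha, cone_single, if_pos ha, map_zero, ZModModule.add_self]
  · rw [cone_single, if_neg ha, boundary_single, boundary_single, Finset.sum_insert ha,
      Finset.erase_insert ha, map_sum]
    congr 1
    refine Finset.sum_congr rfl fun b hb => ?_
    have hab : a ≠ b := fun h => ha (h ▸ hb)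
    rw [cone_single, if_neg (fun h => ha (Finset.mem_of_mem_erase h)),
      Finset.erase_insert_of_ne hab]

lemma boundary_boundary_single (s : Finset α) : boundary (boundary (single s 1)) = 0 := by
  induction s using Finset.induction_on with
  | empty => simp [boundary_single]
  | insert a s ha ih =>
    have hcone : single (insert a s) 1 = cone a (single s 1) := by rw [cone_single, if_neg ha]
    rw [hcone, boundary_cone, map_add, boundary_cone, ih, LinearMap.map_zero, add_zero,
      ZModModule.add_self]

lemma boundary_boundary (x : SimplicialChain α) : boundary (boundary x) = 0 := by
  have h : boundary ∘ₗ boundary = (0 : SimplicialChain α →ₗ[ZMod 2] SimplicialChain α) :=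
    map_ext_single fun s => by
      rw [LinearMap.comp_apply, boundary_boundary_single, LinearMap.zero_apply]
  rw [← LinearMap.comp_apply, h, LinearMap.zero_apply]

/-- The simplex spanned by a list of vertices, or zero if some vertex is repeated. -/
noncomputable def ofList : List α → SimplicialChain α
  | [] => single ∅ 1
  | a :: l => cone a (ofList l)

/-- The chain map from ordered chains that forgets the order of the vertices. -/
noncomputable def ofOrdered : OrderedChain (ZMod 2) α →ₗ[ZMod 2] SimplicialChain α :=
  linearCombination (ZMod 2) ofList

lemma ofOrdered_single (l : List α) : ofOrdered (single l 1) = ofList l := by simp [ofOrdered]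

lemma ofOrdered_single_nil : ofOrdered (single ([] : List α) 1) = single ∅ 1 := by
  rw [ofOrdered_single, ofList]

lemma ofOrdered_cone (a : α) (x : OrderedChain (ZMod 2) α) :
    ofOrdered (OrderedChain.cone a x) = cone a (ofOrdered x) :=
  LinearMap.congr_fun (map_ext_single (T := ofOrdered ∘ₗ OrderedChain.cone a)
    (T' := cone a ∘ₗ ofOrdered) fun l => by simp [ofOrdered_single, ofList]) x

lemma boundary_ofOrdered (x : OrderedChain (ZMod 2) α) :
    boundary (ofOrdered x) = ofOrdered (OrderedChain.boundary x) := by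
  refine LinearMap.congr_fun (map_ext_single (T := boundary ∘ₗ ofOrdered)
    (T' := ofOrdered ∘ₗ OrderedChain.boundary) fun l => ?_) x
  induction l with
  | nil => simp [ofOrdered_single_nil, boundary_single]
  | cons a l ih =>
    simp only [LinearMap.comp_apply] at ih ⊢
    rw [← OrderedChain.cone_single, ofOrdered_cone, boundary_cone, ih, OrderedChain.boundary_cone,
      map_sub, ofOrdered_cone, ZModModule.sub_eq_add]

lemma ofOrdered_single_mem_supported (l : List α) :
    ofOrdered (single l 1) ∈
      supported (ZMod 2) (ZMod 2) {s : Finset α | s.card = l.length ∧ ∀ a ∈ s, a ∈ l} := by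
  rw [ofOrdered_single]
  induction l with
  | nil => exact single_mem_supported _ _ (by simp)
  | cons a l ih =>
    refine map_mem_of_mem_supported (cone a) ?_ ih
    rintro s ⟨hcard, hmem⟩
    rw [cone_single]
    split_ifs with ha
    · exact Submodule.zero_mem _
    · refine single_mem_supported _ _ ⟨by simp [Finset.card_insert_of_notMem ha, hcard], ?_⟩
      exact Finset.forall_mem_insert _ _ _ |>.2
        ⟨List.mem_cons_self, fun b hb => List.mem_cons_of_mem a (hmem b hb)⟩

end SimplicialChain

section AcyclicCarrier

open Finsupp

lemma exists_finset_erase_rec {α M : Type*} [DecidableEq α] [AddCommMonoid M]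
    (F : Finset α → M → M) :
    ∃ u : Finset α → M, ∀ s, u s = F s (∑ a ∈ s, u (s.erase a)) := by
  let F' : (s : Finset α) → ((t : Finset α) → t ⊂ s → M) → M := fun s ih =>
    F s (∑ a ∈ s.attach, ih (s.erase a) (Finset.erase_ssubset a.2))
  refine ⟨Finset.strongInduction F', fun s => ?_⟩
  rw [Finset.strongInduction_eq]
  exact congrArg (F s) (Finset.sum_attach s fun a => Finset.strongInduction F' (s.erase a))

namespace SimplicialChain

variable {α β : Type*} [DecidableEq α]

lemma map_boundary_single {M : Type*} [AddCommMonoid M] [Module (ZMod 2) M]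
    (u : SimplicialChain α →ₗ[ZMod 2] M) (s : Finset α) :
    u (boundary (single s 1)) = ∑ a ∈ s, u (single (s.erase a) 1) := by
  rw [boundary_single, map_sum]

lemma exists_map_single_eq_rec {M : Type*} [AddCommMonoid M] [Module (ZMod 2) M]
    (F : Finset α → M → M) :
    ∃ u : SimplicialChain α →ₗ[ZMod 2] M,
      ∀ s, u (single s 1) = F s (u (boundary (single s 1))) := by
  obtain ⟨v, hv⟩ := exists_finset_erase_rec F
  refine ⟨linearCombination (ZMod 2) v, fun s => ?_⟩
  rw [map_boundary_single]
  simpa using hv s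

lemma exists_chainMap_of_acyclic_carrier {Z : Finset α → Set (List β)} (hnil : [] ∈ Z ∅)
    (hfill : ∀ s : Finset α, s.Nonempty →
      ∀ z ∈ supported (ZMod 2) (ZMod 2) (⋃ a ∈ s, Z (s.erase a)), OrderedChain.boundary z = 0 →
        ∃ y ∈ supported (ZMod 2) (ZMod 2) (Z s), OrderedChain.boundary y = z) :
    ∃ u : SimplicialChain α →ₗ[ZMod 2] OrderedChain (ZMod 2) β,
      u (single ∅ 1) = single [] 1 ∧
      (∀ x, OrderedChain.boundary (u x) = u (boundary x)) ∧
      ∀ s, u (single s 1) ∈ supported (ZMod 2) (ZMod 2) (Z s) := by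
  choose! F hF using hfill
  obtain ⟨u, hu⟩ := exists_map_single_eq_rec fun s z => if s = ∅ then single [] 1 else F s z
  have huempty : u (single ∅ 1) = single [] 1 := (hu ∅).trans (if_pos rfl)
  have hcarried : ∀ s : Finset α, u (single s 1) ∈ supported (ZMod 2) (ZMod 2) (Z s) ∧
      OrderedChain.boundary (u (single s 1)) = u (boundary (single s 1)) := by
    intro s
    induction s using Finset.strongInduction with | _ s ih
    rcases s.eq_empty_or_nonempty with rfl | hs
    · rw [huempty]
      exact ⟨single_mem_supported _ _ hnil, by simp [map_boundary_single]⟩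
    · rw [hu s, if_neg hs.ne_empty]
      refine hF s hs _ ?_ ?_
      · rw [map_boundary_single]
        exact Submodule.sum_mem _ fun a ha => supported_mono
          (Set.subset_biUnion_of_mem (u := fun a => Z (s.erase a)) ha)
          (ih _ (Finset.erase_ssubset ha)).1
      · rw [map_boundary_single, map_sum, Finset.sum_congr rfl fun a ha =>
          (ih _ (Finset.erase_ssubset ha)).2, ← map_sum, ← map_sum, ← boundary_single,
          boundary_boundary, LinearMap.map_zero]
  refine ⟨u, huempty, fun x => ?_, fun s => (hcarried s).1⟩
  exact LinearMap.congr_fun (map_ext_single (T := OrderedChain.boundary ∘ₗ u)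
    (T' := u ∘ₗ boundary) fun s => (hcarried s).2) x

end SimplicialChain

end AcyclicCarrier

section Bicombing

open Finsupp

namespace IsCCC

variable {σ : X → X → ℝ → X} {t : ℝ}

lemma apply_zero (hσ : IsCCC σ) (x y : X) : σ x y 0 = x := hσ.1.2.1 x y

lemma apply_one (hσ : IsCCC σ) (x y : X) : σ x y 1 = y := hσ.1.2.2.1 x y

lemma dist_apply_apply (hσ : IsCCC σ) (x y : X) {s : ℝ} (hs : s ∈ Set.Icc (0 : ℝ) 1)
    (ht : t ∈ Set.Icc (0 : ℝ) 1) : dist (σ x y s) (σ x y t) = |s - t| * dist x y :=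
  hσ.1.2.2.2 x y s hs t ht

lemma dist_apply_left (hσ : IsCCC σ) (x y : X) (ht : t ∈ Set.Icc (0 : ℝ) 1) :
    dist x (σ x y t) = t * dist x y := by
  simpa [hσ.apply_zero, abs_of_nonneg ht.1] using
    hσ.dist_apply_apply x y (Set.left_mem_Icc.2 zero_le_one) ht

lemma apply_self (hσ : IsCCC σ) {x : X} (ht : t ∈ Set.Icc (0 : ℝ) 1) : σ x x t = x := by
  rw [eq_comm, ← dist_eq_zero, hσ.dist_apply_left x x ht, dist_self, mul_zero]

lemma dist_apply_same_left_le (hσ : IsCCC σ) (o x y : X) (ht : t ∈ Set.Icc (0 : ℝ) 1) :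
    dist (σ o x t) (σ o y t) ≤ t * dist x y := by
  simpa using hσ.2.2 o x o y t ht

lemma apply_mem_closedBall (hσ : IsCCC σ) {c x y : X} {r : ℝ} (hx : x ∈ closedBall c r)
    (hy : y ∈ closedBall c r) (ht : t ∈ Set.Icc (0 : ℝ) 1) : σ x y t ∈ closedBall c r := by
  have hconical := hσ.2.2 x y c c t ht
  rw [hσ.apply_self ht] at hconical
  rw [mem_closedBall] at hx hy ⊢
  calc dist (σ x y t) c ≤ (1 - t) * dist x c + t * dist y c := hconical
    _ ≤ (1 - t) * r + t * r :=
      add_le_add (mul_le_mul_of_nonneg_left hx (sub_nonneg.2 ht.2))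
        (mul_le_mul_of_nonneg_left hy ht.1)
    _ = r := by ring

end IsCCC

/-- The ordered simplices with `k` vertices in `C` and mesh less than `e`. -/
def fineLists (C : Set X) (e : ℝ) (k : ℕ) : Set (List X) :=
  {l | l.length = k ∧ (∀ x ∈ l, x ∈ C) ∧ ∀ x ∈ l, ∀ y ∈ l, dist x y < e}

lemma fineLists_mono {C C' : Set X} {e e' : ℝ} (hC : C ⊆ C') (he : e ≤ e') (k : ℕ) :
    fineLists C e k ⊆ fineLists C' e' k :=
  fun _ hl => ⟨hl.1, fun x hx => hC (hl.2.1 x hx),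
    fun x hx y hy => (hl.2.2 x hx y hy).trans_le he⟩

lemma OrderedChain.IsPrismSimplex.dist_le {f g : X → X} {l l' : List X}
    (hl' : OrderedChain.IsPrismSimplex f g l l') {K : NNReal} (hf : LipschitzWith K f)
    (hg : LipschitzWith K g) {x' y' : X} (hx' : x' ∈ l') (hy' : y' ∈ l') :
    ∃ x ∈ l, ∃ y ∈ l, dist x' y' ≤ K * dist x y + dist (f y) (g y) := by
  obtain ⟨x, hx, hxx⟩ := hl'.2 x' hx'
  obtain ⟨y, hy, hyy⟩ := hl'.2 y' hy'
  refine ⟨x, hx, y, hy, ?_⟩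
  have hfxy := hf.dist_le_mul x y
  have hgxy := hg.dist_le_mul x y
  rcases hxx with rfl | rfl <;> rcases hyy with rfl | rfl
  · exact hfxy.trans (le_add_of_nonneg_right dist_nonneg)
  · exact (dist_triangle _ (f y) _).trans (add_le_add_left hfxy _)
  · exact (dist_triangle_right _ _ (g y)).trans (add_le_add_left hgxy _)
  · exact hgxy.trans (le_add_of_nonneg_right dist_nonneg)

/-- Only finitely many pairs of vertices occur, so the strict bound on the mesh survives a
contraction to `p` along geodesics in sufficiently short steps. -/
lemma IsCCC.exists_fine_contraction {σ : X → X → ℝ → X} (hσ : IsCCC σ) (p : X) {e : ℝ}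
    (L : Finset (List X)) (hL : ∀ l ∈ L, ∀ x ∈ l, ∀ y ∈ l, dist x y < e) :
    ∃ (N : ℕ) (h : ℕ → X → X), (∀ x, h 0 x = p) ∧ h N = id ∧
      (∀ i ≤ N, ∀ x, ∃ t ∈ Set.Icc (0 : ℝ) 1, h i x = σ p x t) ∧
      ∀ i < N, ∀ l ∈ L, ∀ l', OrderedChain.IsPrismSimplex (h i) (h (i + 1)) l l' →
        ∀ x ∈ l', ∀ y ∈ l', dist x y < e := by
  classical
  have hev : ∀ᶠ N : ℕ in Filter.atTop, ∀ l ∈ L, ∀ x ∈ l.toFinset, ∀ y ∈ l.toFinset,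
      dist x y + dist p y / N < e := by
    simp only [Filter.eventually_all_finset]
    intro l hl x hx y hy
    have hlim := tendsto_const_nhds (x := dist x y).add
      (tendsto_const_div_atTop_nhds_zero_nat (dist p y))
    rw [add_zero] at hlim
    exact hlim.eventually_lt_const
      (hL l hl x (List.mem_toFinset.1 hx) y (List.mem_toFinset.1 hy))
  obtain ⟨N, hN, hNpos⟩ := (hev.and (Filter.eventually_gt_atTop 0)).exists
  have hNpos' : (0 : ℝ) < N := Nat.cast_pos.2 hNpos
  have hIcc : ∀ i ≤ N, (i : ℝ) / N ∈ Set.Icc (0 : ℝ) 1 := fun i hi =>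
    ⟨by positivity, (div_le_one hNpos').2 (Nat.cast_le.2 hi)⟩
  have hlip : ∀ i ≤ N, LipschitzWith 1 fun x => σ p x (i / N) := fun i hi =>
    LipschitzWith.of_dist_le_mul fun x y => (hσ.dist_apply_same_left_le p x y (hIcc i hi)).trans
      (mul_le_mul_of_nonneg_right (hIcc i hi).2 dist_nonneg)
  have hstep : ∀ i < N, ∀ y, dist (σ p y (i / N)) (σ p y ((i + 1 : ℕ) / N)) = dist p y / N := by
    intro i hi y
    have hdiff : (i : ℝ) / N - ((i + 1 : ℕ) : ℝ) / N = -(1 / N) := by push_cast; ring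
    rw [hσ.dist_apply_apply p y (hIcc i hi.le) (hIcc (i + 1) hi), hdiff, abs_neg,
      abs_of_pos (by positivity)]
    ring
  refine ⟨N, fun i x => σ p x (i / N), fun x => by simp [hσ.apply_zero], ?_,
    fun i hi x => ⟨_, hIcc i hi, rfl⟩, ?_⟩
  · funext x
    simp [div_self hNpos'.ne', hσ.apply_one]
  · intro i hi l hl l' hl' x' hx' y' hy'
    obtain ⟨x, hx, y, hy, hxy⟩ := hl'.dist_le (hlip i hi.le) (hlip (i + 1) hi) hx' hy'
    rw [hstep i hi, NNReal.coe_one, one_mul] at hxy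
    exact hxy.trans_lt (hN l hl x (List.mem_toFinset.2 hx) y (List.mem_toFinset.2 hy))

lemma IsCCC.exists_fine_filling {R : Type*} [Ring R] {σ : X → X → ℝ → X} (hσ : IsCCC σ)
    {C : Set X} {p : X} (hp : p ∈ C) (hC : ∀ x ∈ C, ∀ t ∈ Set.Icc (0 : ℝ) 1, σ p x t ∈ C)
    {e : ℝ} (he : 0 < e)
    {k : ℕ} {z : OrderedChain R X} (hz : z ∈ supported R R (fineLists C e k))
    (hcycle : OrderedChain.boundary z = 0) :
    ∃ y ∈ supported R R (fineLists C e (k + 1)), OrderedChain.boundary y = z := by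
  have hfine : ∀ l ∈ z.support, l ∈ fineLists C e k := fun l hl => (mem_supported _ z).1 hz hl
  obtain ⟨N, h, h_zero, h_N, h_geodesic, h_mesh⟩ :=
    hσ.exists_fine_contraction p z.support fun l hl => (hfine l hl).2.2
  have h_mem : ∀ i ≤ N, ∀ x ∈ C, h i x ∈ C := fun i hi x hx => by
    obtain ⟨t, ht, h⟩ := h_geodesic i hi x
    exact h ▸ hC x hx t ht
  refine ⟨OrderedChain.iteratedPrism h N z + OrderedChain.cone p (OrderedChain.map (h 0) z),
    Submodule.add_mem _ ?_ ?_, ?_⟩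
  · refine map_mem_of_mem_supported (OrderedChain.iteratedPrism h N) (fun l hl => ?_)
      (mem_supported_support R z)
    refine supported_mono ?_ (OrderedChain.iteratedPrism_single_mem_supported h N l)
    rintro l' ⟨i, hi, hl'⟩
    refine ⟨by rw [hl'.1, (hfine l hl).1], fun x' hx' => ?_, h_mesh i hi l hl l' hl'⟩
    obtain ⟨x, hx, rfl | rfl⟩ := hl'.2 x' hx'
    exacts [h_mem i hi.le x ((hfine l hl).2.1 x hx), h_mem (i + 1) hi x ((hfine l hl).2.1 x hx)]
  · refine map_mem_of_mem_supported (OrderedChain.cone p ∘ₗ OrderedChain.map (h 0))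
      (fun l hl => ?_) (mem_supported_support R z)
    rw [LinearMap.comp_apply, OrderedChain.map_single, OrderedChain.cone_single]
    have hconst : ∀ x ∈ p :: l.map (h 0), x = p := by
      simp [h_zero]
    refine single_mem_supported _ _ ⟨by simp [(hfine l hl).1], fun x hx => ?_, fun x hx y hy => ?_⟩
    · rwa [hconst x hx]
    · rwa [hconst x hx, hconst y hy, dist_self]
  · have hprism := OrderedChain.boundary_iteratedPrism_add_iteratedPrism_boundary h N z
    rw [hcycle, map_zero, add_zero, h_N] at hprism
    rw [map_add, hprism, OrderedChain.boundary_cone, OrderedChain.boundary_map, hcycle, map_zero,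
      map_zero, sub_zero, sub_add_cancel, OrderedChain.map_id]

end Bicombing

section Rays

open Filter Topology Bornology

lemma min_one_div_mem_Icc {s d : ℝ} (hs : 0 ≤ s) (hd : 0 ≤ d) :
    min 1 (s / d) ∈ Set.Icc (0 : ℝ) 1 :=
  ⟨le_min zero_le_one (div_nonneg hs hd), min_le_left _ _⟩

lemma min_one_div_mul {s d : ℝ} (hs : 0 ≤ s) (hd : 0 ≤ d) : min 1 (s / d) * d = min d s := by
  rcases hd.eq_or_lt with rfl | hd
  · rw [mul_zero, min_eq_left hs]
  · rw [min_mul_of_nonneg _ _ hd.le, one_mul, div_mul_cancel₀ _ hd.ne']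

lemma abs_min_div_sub_min_div_mul_le {a b s : ℝ} (ha : 0 ≤ a) (hab : a ≤ b) (hs : 0 ≤ s) :
    |min 1 (s / a) - min 1 (s / b)| * b ≤ b - a := by
  rcases ha.eq_or_lt with rfl | ha
  · have hnonneg : 0 ≤ min 1 (s / b) := le_min zero_le_one (div_nonneg hs hab)
    rw [div_zero, min_eq_right zero_le_one, zero_sub, abs_neg, abs_of_nonneg hnonneg, sub_zero]
    exact mul_le_of_le_one_left hab (min_le_left _ _)
  have hb : 0 < b := ha.trans_le hab
  rw [abs_of_nonneg (sub_nonneg.2 (min_le_min_left 1 (div_le_div_of_nonneg_left hs ha hab))),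
    sub_mul, min_mul_of_nonneg 1 (s / b) hb.le, div_mul_cancel₀ _ hb.ne', one_mul]
  rcases le_total s a with hsa | has
  · have hratio : s / a ≤ 1 := (div_le_one ha).2 hsa
    rw [min_eq_right hratio, min_eq_right (hsa.trans hab)]
    calc s / a * b - s = s / a * (b - a) := by field_simp
      _ ≤ b - a := mul_le_of_le_one_left (sub_nonneg.2 hab) hratio
  · rw [min_eq_left ((one_le_div ha).2 has), one_mul]
    exact sub_le_sub_left (le_min hab has) b

/-- The point at distance `min s (dist o x)` from `o` on the `σ`-geodesic from `o` to `x`. -/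
noncomputable def truncate (σ : X → X → ℝ → X) (o : X) (s : ℝ) (x : X) : X :=
  σ o x (min 1 (s / dist o x))

namespace IsCCC

variable {σ : X → X → ℝ → X}

lemma truncate_zero (hσ : IsCCC σ) (o x : X) : truncate σ o 0 x = o := by
  rw [truncate, zero_div, min_eq_right zero_le_one, hσ.apply_zero]

lemma truncate_of_dist_le (hσ : IsCCC σ) {o x : X} {s : ℝ} (hs : dist o x ≤ s) :
    truncate σ o s x = x := by
  rcases eq_or_ne o x with rfl | hox
  · rw [truncate, hσ.apply_self (min_one_div_mem_Icc (dist_nonneg.trans hs) dist_nonneg)]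
  · rw [truncate, min_eq_left ((one_le_div (dist_pos.2 hox)).2 hs), hσ.apply_one]

lemma dist_truncate_truncate (hσ : IsCCC σ) (o x : X) {s t : ℝ} (hs : 0 ≤ s) (ht : 0 ≤ t) :
    dist (truncate σ o s x) (truncate σ o t x) = |min (dist o x) s - min (dist o x) t| := by
  have hd : 0 ≤ dist o x := dist_nonneg
  rw [truncate, truncate, hσ.dist_apply_apply o x (min_one_div_mem_Icc hs hd)
    (min_one_div_mem_Icc ht hd), ← min_one_div_mul hs hd, ← min_one_div_mul ht hd, ← sub_mul,
    abs_mul, abs_of_nonneg hd]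

lemma dist_truncate_truncate_le (hσ : IsCCC σ) (o x : X) {s t : ℝ} (hs : 0 ≤ s) (ht : 0 ≤ t) :
    dist (truncate σ o s x) (truncate σ o t x) ≤ |s - t| := by
  rw [hσ.dist_truncate_truncate o x hs ht]
  simpa using abs_min_sub_min_le_max (dist o x) s (dist o x) t

lemma lipschitzWith_truncate (hσ : IsCCC σ) (o : X) {s : ℝ} (hs : 0 ≤ s) :
    LipschitzWith 2 (truncate σ o s) := by
  have hmono : ∀ x y, dist o x ≤ dist o y →
      dist (truncate σ o s x) (truncate σ o s y) ≤ 2 * dist x y := by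
    intro x y hxy
    have hx := min_one_div_mem_Icc hs (dist_nonneg (x := o) (y := x))
    have hy := min_one_div_mem_Icc hs (dist_nonneg (x := o) (y := y))
    calc dist (truncate σ o s x) (truncate σ o s y)
        ≤ dist (σ o x (min 1 (s / dist o x))) (σ o y (min 1 (s / dist o x))) +
          dist (σ o y (min 1 (s / dist o x))) (σ o y (min 1 (s / dist o y))) :=
        dist_triangle _ _ _
      _ ≤ dist x y + (dist o y - dist o x) := by
        refine add_le_add ((hσ.dist_apply_same_left_le o x y hx).trans
          (mul_le_of_le_one_left dist_nonneg hx.2)) ?_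
        rw [hσ.dist_apply_apply o y hx hy]
        exact abs_min_div_sub_min_div_mul_le dist_nonneg hxy hs
      _ ≤ 2 * dist x y := by linarith [dist_triangle o x y]
  refine LipschitzWith.of_dist_le_mul fun x y => ?_
  rcases le_total (dist o x) (dist o y) with h | h
  · exact hmono x y h
  · rw [dist_comm, dist_comm x]
    exact hmono y x h

lemma apply_eq_truncate (hσ : IsCCC σ) (o x : X) {t : ℝ} (ht : t ∈ Set.Icc (0 : ℝ) 1) :
    σ o x t = truncate σ o (t * dist o x) x := by
  rcases eq_or_ne o x with rfl | hox
  · rw [dist_self, mul_zero, hσ.truncate_zero, hσ.apply_self ht]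
  · rw [truncate, mul_div_cancel_right₀ _ (dist_ne_zero.2 hox), min_eq_right ht.2]

lemma apply_truncate (hσ : IsCCC σ) {o x : X} {s t : ℝ} (hs : 0 ≤ s) (hsx : s < dist o x)
    (ht : t ∈ Set.Icc (0 : ℝ) 1) : σ o (truncate σ o s x) t = truncate σ o (t * s) x := by
  have hd : 0 < dist o x := hs.trans_lt hsx
  have hratio : s / dist o x ≤ 1 := (div_le_one hd).2 hsx.le
  have hconsistent := hσ.2.1 o x 0 (s / dist o x) t le_rfl (div_nonneg hs hd.le) hratio ht
  rw [hσ.apply_zero, mul_zero, zero_add, ← mul_div_assoc] at hconsistent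
  rw [truncate, truncate, min_eq_right hratio, hconsistent, min_eq_right]
  exact (div_le_one hd).2 ((mul_le_of_le_one_left hs ht.2).trans hsx.le)

lemma exists_ray_of_ultrafilter [ProperSpace X] (hσ : IsCCC σ) (o : X) {U : Ultrafilter X}
    (hU : (U : Filter X) ≤ cobounded X) :
    ∃ ξ, IsRay σ ξ ∧ ξ 0 = o ∧ ∀ s, 0 ≤ s → Tendsto (truncate σ o s) U (𝓝 (ξ s)) := by
  have hfar : ∀ s, ∀ᶠ y in (U : Filter X), s < dist o y := fun s =>
    ((tendsto_dist_left_cobounded_atTop o).mono_left hU).eventually_gt_atTop s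
  have hlim : ∀ s, ∃ z, Tendsto (truncate σ o (max s 0)) U (𝓝 z) := by
    intro s
    have hball : ∀ y, truncate σ o (max s 0) y ∈ closedBall o (max s 0) := fun y => by
      have h := hσ.dist_truncate_truncate_le o y (le_max_right s 0) le_rfl
      rwa [hσ.truncate_zero, sub_zero, abs_of_nonneg (le_max_right s 0)] at h
    obtain ⟨z, -, hz⟩ := (isCompact_closedBall o (max s 0)).ultrafilter_le_nhds
      (U.map (truncate σ o (max s 0))) (le_principal_iff.2 (Filter.mem_map.2 (univ_mem' hball)))
    exact ⟨z, hz⟩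
  choose ξ hξ using hlim
  have hξ_nonneg : ∀ s, 0 ≤ s → Tendsto (truncate σ o s) U (𝓝 (ξ s)) := fun s hs => by
    simpa only [max_eq_left hs] using hξ s
  have hξ_zero : ξ 0 = o := by
    refine tendsto_nhds_unique (hξ_nonneg 0 le_rfl) ?_
    simpa only [funext (hσ.truncate_zero o)] using tendsto_const_nhds
  refine ⟨ξ, ⟨fun s hs => ?_, fun s t hs ht => ?_, fun s hs t ht => ?_⟩, hξ_zero, hξ_nonneg⟩
  · refine tendsto_nhds_unique (hξ s) ?_
    simpa only [max_eq_right hs] using hξ_nonneg 0 le_rfl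
  · refine tendsto_nhds_unique ((hξ_nonneg s hs).dist (hξ_nonneg t ht)) ?_
    refine tendsto_const_nhds.congr' ?_
    filter_upwards [hfar s, hfar t] with y hsy hty
    rw [hσ.dist_truncate_truncate o y hs ht, min_eq_right hsy.le, min_eq_right hty.le]
  · rw [hξ_zero]
    refine tendsto_nhds_unique ?_ (hξ_nonneg (t * s) (mul_nonneg ht.1 hs))
    have hcontinuous : Continuous fun x => σ o x t :=
      (LipschitzWith.of_dist_le_mul (K := ⟨t, ht.1⟩) fun x y =>
        hσ.dist_apply_same_left_le o x y ht).continuous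
    refine ((hcontinuous.tendsto (ξ s)).comp (hξ_nonneg s hs)).congr' ?_
    filter_upwards [hfar s] with y hy
    exact hσ.apply_truncate hs hy ht

/-- Otherwise geodesics from `o` to ever farther points pass near `x`, and a limit of them is a ray
that does too. -/
lemma eventually_forall_lt_dist [ProperSpace X] (hσ : IsCCC σ) {o x : X} {C : ℝ}
    (hrays : ∀ ξ, IsRay σ ξ → ξ 0 = o → ∀ t, 0 ≤ t → C < dist (ξ t) x) :
    ∀ᶠ y in cobounded X, ∀ t ∈ Set.Icc (0 : ℝ) 1, C < dist (σ o y t) x := by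
  by_contra hnot
  have hfreq : ∃ᶠ y in cobounded X, ∃ t, t ∈ Set.Icc (0 : ℝ) 1 ∧ dist (σ o y t) x ≤ C := by
    refine (not_eventually.1 hnot).mono fun y hy => ?_
    push Not at hy
    exact hy
  have := frequently_iff_neBot.1 hfreq
  let U := Ultrafilter.of (cobounded X ⊓ 𝓟 {y | ∃ t, t ∈ Set.Icc (0 : ℝ) 1 ∧ dist (σ o y t) x ≤ C})
  have hU := le_inf_iff.1 (Ultrafilter.of_le _ : (U : Filter X) ≤ _)
  obtain ⟨ξ, hξ, hξ_zero, hξ_lim⟩ := hσ.exists_ray_of_ultrafilter o hU.1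
  obtain ⟨t, ht⟩ := Filter.Eventually.choice
    (r := fun y t => t ∈ Set.Icc (0 : ℝ) 1 ∧ dist (σ o y t) x ≤ C) (le_principal_iff.1 hU.2)
  have hlength : ∀ᶠ y in (U : Filter X), t y * dist o y ∈ Set.Icc 0 (C + dist o x) := by
    filter_upwards [ht] with y ⟨hty, hy⟩
    refine ⟨mul_nonneg hty.1 dist_nonneg, ?_⟩
    rw [← hσ.dist_apply_left o y hty]
    linarith [dist_triangle_right o (σ o y (t y)) x, dist_comm x (σ o y (t y))]
  obtain ⟨s, hs, hs_lim⟩ := isCompact_Icc.ultrafilter_le_nhds (U.map fun y => t y * dist o y)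
    (le_principal_iff.2 hlength)
  have hnear : Tendsto (fun y => σ o y (t y)) U (𝓝 (ξ s)) := by
    refine tendsto_of_tendsto_of_dist (hξ_lim s hs.1) ?_
    have hs_abs : Tendsto (fun y => |s - t y * dist o y|) U (𝓝 0) := by
      simpa using
        ((tendsto_const_nhds (x := s)).sub (hs_lim : Tendsto _ (U : Filter X) _)).abs
    refine squeeze_zero' (.of_forall fun _ => dist_nonneg) ?_ hs_abs
    filter_upwards [ht, hlength] with y hy hly
    rw [hσ.apply_eq_truncate o y hy.1]
    exact hσ.dist_truncate_truncate_le o y hs.1 hly.1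
  exact (hrays ξ hξ hξ_zero s hs.1).not_ge
    (le_of_tendsto (hnear.dist tendsto_const_nhds) (ht.mono fun y hy => hy.2))

end IsCCC

lemma IsRay.noncompactSpace {σ : X → X → ℝ → X} {ξ : ℝ → X} (hξ : IsRay σ ξ) :
    NoncompactSpace X := by
  refine ⟨fun hcompact => ?_⟩
  obtain ⟨D, hD⟩ := Metric.isBounded_iff.1 hcompact.isBounded
  have hD' : 0 ≤ D := dist_nonneg.trans (hD (mem_univ (ξ 0)) (mem_univ (ξ 0)))
  have hdist := hξ.2.1 (D + 1) 0 (by positivity) le_rfl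
  rw [sub_zero, abs_of_nonneg (by positivity)] at hdist
  linarith [hD (mem_univ (ξ (D + 1))) (mem_univ (ξ 0))]

end Rays

section AvoidingContraction

open Filter Bornology

/-- A discrete contraction of `X` to a point: the maps `h i` have uniform Lipschitz constant and
step size, start at a constant map and are eventually the identity on every ball. It avoids `c` if
the point and the tracks of all points at distance more than `R` from `c` stay at distance more
than `r` from `c`. -/
structure IsAvoidingContraction (h : ℕ → X → X) (c : X) (r R : ℝ) : Prop where
  exists_base : ∃ b, r < dist b c ∧ ∀ x, h 0 x = b
  lipschitzWith : ∀ i, LipschitzWith 2 (h i)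
  dist_succ_le : ∀ i x, dist (h i x) (h (i + 1) x) ≤ 1
  lt_dist : ∀ i x, R < dist x c → r < dist (h i x) c
  eq_self : ∀ ρ, ∃ N, ∀ x, dist x c ≤ ρ → h N x = x

/-- Every point of `X` is avoided by contractions, uniformly: the radius `R` that has to be
removed depends only on the radius `r` to be avoided. -/
def HasAvoidingContractions (X : Type*) [MetricSpace X] : Prop :=
  ∀ r : ℝ, ∃ R : ℝ, ∀ c : X, ∃ h : ℕ → X → X, IsAvoidingContraction h c r R

namespace IsAvoidingContraction

variable {h : ℕ → X → X} {c : X} {r R : ℝ}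

lemma lt_dist_self (hh : IsAvoidingContraction h c r R) {x : X} (hx : R < dist x c) :
    r < dist x c := by
  obtain ⟨N, hN⟩ := hh.eq_self (dist x c)
  simpa [hN x le_rfl] using hh.lt_dist N x hx

lemma conj (hh : IsAvoidingContraction h c r R) (e : X ≃ᵢ X) :
    IsAvoidingContraction (fun i => e ∘ h i ∘ e.symm) (e c) r R where
  exists_base := by
    obtain ⟨b, hb, hconst⟩ := hh.exists_base
    exact ⟨e b, by rwa [e.dist_eq], fun x => congrArg e (hconst _)⟩
  lipschitzWith i := by
    simpa using e.isometry.lipschitz.comp ((hh.lipschitzWith i).comp e.symm.isometry.lipschitz)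
  dist_succ_le i x := by
    simpa only [Function.comp_apply, e.dist_eq] using hh.dist_succ_le i (e.symm x)
  lt_dist i x hx := by
    rw [← e.apply_symm_apply x, e.dist_eq] at hx
    simpa only [Function.comp_apply, e.dist_eq] using hh.lt_dist i (e.symm x) hx
  eq_self ρ := by
    obtain ⟨N, hN⟩ := hh.eq_self ρ
    refine ⟨N, fun x hx => ?_⟩
    rw [← e.apply_symm_apply x, e.dist_eq] at hx
    simp [hN _ hx]

lemma recenter (hh : IsAvoidingContraction h c r R) {c' : X} {r' D : ℝ} (hc : dist c c' ≤ D)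
    (hr : r' + D ≤ r) : IsAvoidingContraction h c' r' (R + D) where
  exists_base := by
    obtain ⟨b, hb, hconst⟩ := hh.exists_base
    exact ⟨b, by linarith [dist_triangle_right b c c'], hconst⟩
  lipschitzWith := hh.lipschitzWith
  dist_succ_le := hh.dist_succ_le
  lt_dist i x hx := by
    have hfar := hh.lt_dist i x (by linarith [dist_triangle x c c'])
    linarith [dist_triangle_right (h i x) c c']
  eq_self ρ := by
    obtain ⟨N, hN⟩ := hh.eq_self (ρ + D)
    exact ⟨N, fun x hx => hN x (by linarith [dist_triangle_right x c c'])⟩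

end IsAvoidingContraction

lemma IsCCC.exists_isAvoidingContraction [ProperSpace X] [NoncompactSpace X]
    {σ : X → X → ℝ → X} (hσ : IsCCC σ) {o x : X} {C : ℝ}
    (hrays : ∀ ξ, IsRay σ ξ → ξ 0 = o → ∀ t, 0 ≤ t → C < dist (ξ t) x) :
    ∃ h R, IsAvoidingContraction h x C R := by
  have : (cobounded X).NeBot := by
    rw [cobounded_eq_cocompact]
    infer_instance
  have hfar := hσ.eventually_forall_lt_dist hrays
  obtain ⟨y, hy⟩ := hfar.exists
  obtain ⟨R, -, hR⟩ := (hasBasis_cobounded_compl_closedBall x).eventually_iff.1 hfar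
  refine ⟨fun i => truncate σ o i, R, ⟨o, ?_, fun z => ?_⟩,
    fun i => hσ.lipschitzWith_truncate o i.cast_nonneg, fun i z => ?_, fun i z hz => ?_,
    fun ρ => ?_⟩
  · simpa only [hσ.apply_zero] using hy 0 (Set.left_mem_Icc.2 zero_le_one)
  · rw [Nat.cast_zero, hσ.truncate_zero]
  · simpa using hσ.dist_truncate_truncate_le o z i.cast_nonneg (i + 1).cast_nonneg
  · exact hR (by simpa using hz) _ (min_one_div_mem_Icc i.cast_nonneg dist_nonneg)
  · obtain ⟨N, hN⟩ := exists_nat_ge (ρ + dist o x)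
    exact ⟨N, fun z hz => hσ.truncate_of_dist_le (by linarith [dist_triangle_right o z x])⟩

variable {G : Type*} [Group G] [MulAction G X] [IsIsometricSMul G X]

lemma exists_forall_exists_dist_smul_le
    (hcocompact : ∃ K : Set X, IsCompact K ∧ ∀ x : X, ∃ g : G, x ∈ g • K) :
    ∃ D : ℝ, ∀ x y : X, ∃ g : G, dist (g • x) y ≤ D := by
  obtain ⟨K, hK, hcover⟩ := hcocompact
  obtain ⟨D, hD⟩ := Metric.isBounded_iff.1 hK.isBounded
  refine ⟨D, fun x y => ?_⟩
  obtain ⟨g, k, hk, rfl⟩ := hcover x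
  obtain ⟨g', k', hk', rfl⟩ := hcover y
  refine ⟨g' * g⁻¹, ?_⟩
  simpa only [mul_smul, inv_smul_smul, dist_smul] using hD hk hk'

lemma IsCCC.hasAvoidingContractions [ProperSpace X] [NoncompactSpace X]
    {σ : X → X → ℝ → X} (hσ : IsCCC σ)
    (hcocompact : ∃ K : Set X, IsCompact K ∧ ∀ x : X, ∃ g : G, x ∈ g • K)
    (hrays : ∀ C, 0 ≤ C → ∃ o x, ∀ ξ, IsRay σ ξ → ξ 0 = o → ∀ t, 0 ≤ t → C < dist (ξ t) x) :
    HasAvoidingContractions X := by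
  obtain ⟨D, hD⟩ := exists_forall_exists_dist_smul_le hcocompact
  intro r
  obtain ⟨o, x, hx⟩ := hrays (max (r + D) 0) (le_max_right _ _)
  obtain ⟨h, R, hh⟩ := hσ.exists_isAvoidingContraction hx
  refine ⟨R + D, fun c => ?_⟩
  obtain ⟨g, hg⟩ := hD x c
  exact ⟨_, (hh.conj (IsometryEquiv.constSMul g)).recenter hg (le_max_left _ _)⟩

end AvoidingContraction

section Net

lemma exists_selection_of_open_cover [ProperSpace X] [Nonempty X] {𝒱 : Set (Set X)}
    (hopen : ∀ V ∈ 𝒱, IsOpen V) (hcover : ⋃₀ 𝒱 = univ) :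
    ∃ W : X → Set X, (∀ x, W x ∈ 𝒱 ∧ x ∈ W x) ∧
      ∀ c r, (W '' closedBall c r).Finite ∧ ∃ δ > 0, ∀ x ∈ closedBall c r, ball x δ ⊆ W x := by
  have hcompact : ∀ {K : Set X}, IsCompact K → ∃ F ⊆ 𝒱, F.Finite ∧
      ∃ δ > 0, ∀ x ∈ K, ∃ V ∈ F, ball x δ ⊆ V := by
    intro K hK
    obtain ⟨F, hF, hfinite, hKF⟩ := hK.elim_finite_subcover_image (c := id) hopen (by
      simp [← sUnion_eq_biUnion, hcover])
    obtain ⟨δ, hδ, hball⟩ := lebesgue_number_lemma_of_metric_sUnion hK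
      (fun V hV => hopen V (hF hV)) (by rwa [sUnion_eq_biUnion])
    exact ⟨F, hF, hfinite, δ, hδ, hball⟩
  obtain ⟨o⟩ := ‹Nonempty X›
  choose F hF𝒱 hFfinite δ hδ hFball using fun m : ℕ =>
    hcompact (isCompact_closedBall o ((m : ℝ) + 1))
  choose W hWF hball using fun x =>
    hFball ⌊dist x o⌋₊ x (mem_closedBall.2 (Nat.lt_floor_add_one _).le)
  refine ⟨W, fun x => ⟨hF𝒱 _ (hWF x), hball x (mem_ball_self (hδ _))⟩, fun c r => ?_⟩
  have hfloor : ∀ x ∈ closedBall c r, ⌊dist x o⌋₊ ≤ ⌊r + dist c o⌋₊ := fun x hx =>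
    Nat.floor_mono ((dist_triangle x c o).trans (add_le_add_left (mem_closedBall.1 hx) _))
  refine ⟨((finite_Iic ⌊r + dist c o⌋₊).biUnion fun m _ => hFfinite m).subset ?_, ?_⟩
  · rintro _ ⟨x, hx, rfl⟩
    exact mem_biUnion (mem_Iic.2 (hfloor x hx)) (hWF x)
  · obtain ⟨m, -, hm⟩ := exists_min_image (Iic ⌊r + dist c o⌋₊) δ (finite_Iic _) nonempty_Iic
    exact ⟨δ m, hδ m, fun x hx => (ball_subset_ball (hm _ (hfloor x hx))).trans (hball x)⟩

/-- A locally finite discretization `w : X → A` of `X` onto a subset `A` such that sufficiently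
fine subsets of a ball meet at most `n + 1` of the fibres of `w`. -/
structure IsNet {A : Set X} (w : X → A) (n : ℕ) : Prop where
  dist_le : ∀ x, dist (w x : X) x ≤ 2
  finite : ∀ c r, {a : A | dist (a : X) c ≤ r}.Finite
  encard_image_le : ∀ c r, ∃ e > 0, ∀ s ⊆ closedBall c r, (∀ x ∈ s, ∀ y ∈ s, dist x y < e) →
    (w '' s).encard ≤ n + 1

lemma FiniteCoveringDimension.exists_isNet [ProperSpace X] [Nonempty X]
    (hdim : FiniteCoveringDimension X) :
    ∃ (A : Set X) (w : X → A) (n : ℕ), IsNet w n := by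
  obtain ⟨n, hn⟩ := hdim
  obtain ⟨𝒱, hopen, hcover, hrefine, hmult⟩ := hn (range fun x : X => ball x 1)
    (forall_mem_range.2 fun x => isOpen_ball)
    (eq_univ_of_forall fun x => ⟨ball x 1, ⟨x, rfl⟩, mem_ball_self one_pos⟩)
  obtain ⟨W, hW, hlocal⟩ := exists_selection_of_open_cover hopen hcover
  choose! p hp using fun (V : Set X) (hV : V.Nonempty) => hV
  have hpW : ∀ x, p (W x) ∈ W x := fun x => hp _ ⟨x, (hW x).2⟩
  have hdist : ∀ x, dist (p (W x)) x ≤ 2 := fun x => by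
    obtain ⟨_, ⟨c, rfl⟩, hc⟩ := hrefine _ (hW x).1
    linarith [dist_triangle_right (p (W x)) x c, mem_ball.1 (hc (hpW x)),
      mem_ball.1 (hc (hW x).2)]
  refine ⟨range (p ∘ W), rangeFactorization (p ∘ W), n, hdist, fun c r => ?_, fun c r => ?_⟩
  · refine Finite.of_finite_image (f := Subtype.val) ?_ Subtype.val_injective.injOn
    refine ((hlocal c (r + 2)).1.image p).subset ?_
    rintro _ ⟨⟨_, x, rfl⟩, hx, rfl⟩
    refine mem_image_of_mem p (mem_image_of_mem W (mem_closedBall.2 ?_))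
    have hx' : dist (p (W x)) c ≤ r := hx
    linarith [dist_triangle_left x c (p (W x)), hdist x]
  · obtain ⟨δ, hδ, hball⟩ := (hlocal c r).2
    refine ⟨δ, hδ, fun s hs hmesh => ?_⟩
    rcases s.eq_empty_or_nonempty with rfl | ⟨x₀, hx₀⟩
    · simp
    have hsubset : W '' s ⊆ {V | V ∈ 𝒱 ∧ x₀ ∈ V} := by
      rintro _ ⟨x, hx, rfl⟩
      exact ⟨(hW x).1, hball x (hs hx) (hmesh x₀ hx₀ x hx)⟩
    calc (rangeFactorization (p ∘ W) '' s).encard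
        = (p '' (W '' s)).encard := by
          rw [← Subtype.val_injective.encard_image, image_image, image_image]
          rfl
      _ ≤ {V | V ∈ 𝒱 ∧ x₀ ∈ V}.encard := (encard_image_le p _).trans (encard_le_encard hsubset)
      _ ≤ n + 1 := by
        exact_mod_cast encard_le_coe_iff_finite_ncard_le.2 (hmult x₀)

end Net

section Discretization

open Finsupp

variable {α β : Type*} [DecidableEq β]

/-- The chain map that moves the vertices of an ordered chain by `w` and forgets their order. -/
noncomputable def discretize (w : α → β) : OrderedChain (ZMod 2) α →ₗ[ZMod 2] SimplicialChain β :=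
  SimplicialChain.ofOrdered ∘ₗ OrderedChain.map w

lemma discretize_single_nil (w : α → β) : discretize w (single [] 1) = single ∅ 1 := by
  rw [discretize, LinearMap.comp_apply, OrderedChain.map_single, List.map_nil,
    SimplicialChain.ofOrdered_single_nil]

lemma boundary_discretize (w : α → β) (x : OrderedChain (ZMod 2) α) :
    SimplicialChain.boundary (discretize w x) = discretize w (OrderedChain.boundary x) := by
  simp only [discretize, LinearMap.comp_apply, SimplicialChain.boundary_ofOrdered,
    OrderedChain.boundary_map]

lemma discretize_single_mem_supported (w : α → β) (l : List α) :
    discretize w (single l 1) ∈ supported (ZMod 2) (ZMod 2)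
      {s : Finset β | s.card = l.length ∧ ∀ b ∈ s, ∃ x ∈ l, w x = b} := by
  rw [discretize, LinearMap.comp_apply, OrderedChain.map_single]
  simpa only [List.length_map, List.mem_map] using
    SimplicialChain.ofOrdered_single_mem_supported (l.map w)

end Discretization

section Straightening

open Finsupp

variable {A : Set X}

/-- The intersection of the closed balls containing the vertices of a simplex. -/
def simplexHull (s : Finset A) : Set X :=
  {x | ∀ c r, (∀ a ∈ s, dist (a : X) c ≤ r) → dist x c ≤ r}

lemma mem_simplexHull {s : Finset A} {a : A} (ha : a ∈ s) : (a : X) ∈ simplexHull s :=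
  fun _ _ h => h a ha

lemma simplexHull_mono {s t : Finset A} (hst : s ⊆ t) : simplexHull s ⊆ simplexHull t :=
  fun _ hx c r h => hx c r fun a ha => h a (hst ha)

lemma IsCCC.apply_mem_simplexHull {σ : X → X → ℝ → X} (hσ : IsCCC σ) {s : Finset A} {x y : X}
    (hx : x ∈ simplexHull s) (hy : y ∈ simplexHull s) {t : ℝ} (ht : t ∈ Set.Icc (0 : ℝ) 1) :
    σ x y t ∈ simplexHull s :=
  fun c r h => hσ.apply_mem_closedBall (hx c r h) (hy c r h) ht

/-- The ordered simplices in the hull of `s`, with as many vertices as `s`, whose mesh is less than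
the value of the gauge `g` at some vertex of `s`. -/
def gaugedLists (g : A → ℝ) (s : Finset A) : Set (List X) :=
  {l | l.length = s.card ∧ (∀ x ∈ l, x ∈ simplexHull s) ∧
    ∀ x ∈ l, ∀ y ∈ l, ∃ a ∈ s, dist x y < g a}

lemma nil_mem_gaugedLists (g : A → ℝ) : [] ∈ gaugedLists g ∅ := by
  simp [gaugedLists]

lemma fineLists_subset_gaugedLists {g : A → ℝ} {s : Finset A} {a : A} (ha : a ∈ s) :
    fineLists (simplexHull s) (g a) s.card ⊆ gaugedLists g s :=
  fun _ hl => ⟨hl.1, hl.2.1, fun x hx y hy => ⟨a, ha, hl.2.2 x hx y hy⟩⟩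

lemma gaugedLists_subset_fineLists {g : A → ℝ} {s : Finset A} {e : ℝ} (he : ∀ a ∈ s, g a ≤ e) :
    gaugedLists g s ⊆ fineLists (simplexHull s) e s.card :=
  fun _ hl => ⟨hl.1, hl.2.1, fun x hx y hy =>
    let ⟨a, ha, hxy⟩ := hl.2.2 x hx y hy
    hxy.trans_le (he a ha)⟩

/-- A chain map `u` from the simplices with vertices in `A` to fine ordered simplices in their
hulls. -/
structure IsStraightening [DecidableEq A]
    (u : SimplicialChain A →ₗ[ZMod 2] OrderedChain (ZMod 2) X) : Prop where
  map_empty : u (single ∅ 1) = single [] 1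
  boundary_map : ∀ x, OrderedChain.boundary (u x) = u (SimplicialChain.boundary x)
  map_single_mem : ∀ s, u (single s 1) ∈
    supported (ZMod 2) (ZMod 2) (fineLists (simplexHull s) 1 s.card)

lemma IsCCC.exists_gauged_straightening [DecidableEq A] {σ : X → X → ℝ → X} (hσ : IsCCC σ)
    {g : A → ℝ} (hg : ∀ a, 0 < g a) :
    ∃ u : SimplicialChain A →ₗ[ZMod 2] OrderedChain (ZMod 2) X,
      u (single ∅ 1) = single [] 1 ∧
      (∀ x, OrderedChain.boundary (u x) = u (SimplicialChain.boundary x)) ∧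
      ∀ s, u (single s 1) ∈ supported (ZMod 2) (ZMod 2) (gaugedLists g s) := by
  refine SimplicialChain.exists_chainMap_of_acyclic_carrier (nil_mem_gaugedLists g)
    fun s hs z hz hcycle => ?_
  obtain ⟨a, ha, hmax⟩ := s.exists_max_image g hs
  have hface : ⋃ b ∈ s, gaugedLists g (s.erase b) ⊆
      fineLists (simplexHull s) (g a) (s.card - 1) := iUnion₂_subset fun b hb => by
    refine (gaugedLists_subset_fineLists fun c hc => hmax c (Finset.mem_of_mem_erase hc)).trans ?_
    rw [Finset.card_erase_of_mem hb]
    exact fineLists_mono (simplexHull_mono (s.erase_subset b)) le_rfl _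
  obtain ⟨y, hy, hboundary⟩ := hσ.exists_fine_filling (mem_simplexHull ha)
    (fun x hx t ht => hσ.apply_mem_simplexHull (mem_simplexHull ha) hx ht) (hg a)
    (supported_mono hface hz) hcycle
  rw [Nat.sub_add_cancel hs.card_pos] at hy
  exact ⟨y, supported_mono (fineLists_subset_gaugedLists ha) hy, hboundary⟩

lemma discretize_eq_zero_of_encard_image_le {α β : Type*} [DecidableEq β] {w : α → β} {n : ℕ}
    {Z : Set (List α)} (hlength : ∀ l ∈ Z, n < l.length)
    (hZ : ∀ l ∈ Z, (w '' {x | x ∈ l}).encard ≤ n) {z : OrderedChain (ZMod 2) α}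
    (hz : z ∈ supported (ZMod 2) (ZMod 2) Z) : discretize w z = 0 := by
  refine map_eq_of_mem_supported (T' := (0 : _ →ₗ[ZMod 2] SimplicialChain β)) (fun l hl => ?_) hz
  have hempty : {s : Finset β | s.card = l.length ∧ ∀ b ∈ s, ∃ x ∈ l, w x = b} = ∅ := by
    refine eq_empty_of_forall_notMem fun s hs => (hlength l hl).not_ge ?_
    have hcard := (encard_le_encard (s := (s : Set β)) fun b hb => hs.2 b hb).trans (hZ l hl)
    rw [encard_coe_eq_coe_finsetCard, hs.1] at hcard
    exact_mod_cast hcard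
  have hmem := discretize_single_mem_supported w l
  rw [hempty, supported_empty] at hmem
  exact (Submodule.mem_bot _).1 hmem

/-- The gauge makes the straightened simplices small compared with the multiplicity scale of the
net near their own vertices; there is no such scale common to all of `X`. -/
lemma IsCCC.exists_isStraightening [DecidableEq A] {σ : X → X → ℝ → X} (hσ : IsCCC σ)
    {w : X → A} {n : ℕ} (hw : IsNet w n) (r : ℝ) :
    ∃ u, IsStraightening u ∧ ∀ t : Finset A, (∀ a ∈ t, ∀ b ∈ t, dist (a : X) b ≤ r) →
      n + 2 ≤ t.card → discretize w (u (single t 1)) = 0 := by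
  choose e he hmult using fun a : A => hw.encard_image_le a r
  obtain ⟨u, hempty, hboundary, hu⟩ :=
    hσ.exists_gauged_straightening fun a => lt_min one_pos (he a)
  refine ⟨u, ⟨hempty, hboundary, fun s => supported_mono
    (gaugedLists_subset_fineLists fun a _ => min_le_left _ _) (hu s)⟩, fun t ht hcard => ?_⟩
  obtain ⟨a, ha, hmax⟩ := t.exists_max_image (fun a => min 1 (e a))
    (Finset.card_pos.1 (by omega))
  refine discretize_eq_zero_of_encard_image_le (n := n + 1)
    (fun l hl => by rw [hl.1]; omega) (fun l hl => ?_) (hu t)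
  have hfine := gaugedLists_subset_fineLists hmax hl
  exact_mod_cast hmult a {x | x ∈ l} (fun x hx => hfine.2.1 x hx a r fun b hb => ht b hb a ha)
    fun x hx y hy => (hfine.2.2 x hx y hy).trans_le (min_le_right _ _)

end Straightening

section Controlled

open Finsupp

variable {A : Set X}

/-- The simplicial chains with `c` vertices per simplex, all in the closed ball of radius `r` around
`p`. -/
def ballChains (A : Set X) (c : ℤ) (p : X) (r : ℝ) : Submodule (ZMod 2) (SimplicialChain A) :=
  supported (ZMod 2) (ZMod 2) {s : Finset A | (s.card : ℤ) = c ∧ ∀ a ∈ s, dist (a : X) p ≤ r}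

lemma ballChains_mono {c : ℤ} {p : X} {r R : ℝ} (h : r ≤ R) :
    ballChains A c p r ≤ ballChains A c p R :=
  supported_mono fun _ hs => ⟨hs.1, fun a ha => (hs.2 a ha).trans h⟩

/-- The operators of degree `k` that move the vertices of simplices by a distance bounded in terms
of the size of the simplex. -/
def controlled (A : Set X) (k : ℤ) :
    Submodule (ZMod 2) (SimplicialChain A →ₗ[ZMod 2] SimplicialChain A) where
  carrier := {T | ∀ r, ∃ R, ∀ c p, ∀ x ∈ ballChains A c p r, T x ∈ ballChains A (c + k) p R}
  add_mem' {T T'} hT hT' r := by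
    obtain ⟨R, hR⟩ := hT r
    obtain ⟨R', hR'⟩ := hT' r
    exact ⟨max R R', fun c p x hx => Submodule.add_mem _
      (ballChains_mono (le_max_left R R') (hR c p x hx))
      (ballChains_mono (le_max_right R R') (hR' c p x hx))⟩
  zero_mem' r := ⟨r, fun _ _ _ _ => Submodule.zero_mem _⟩
  smul_mem' a T hT r := by
    obtain ⟨R, hR⟩ := hT r
    exact ⟨R, fun c p x hx => Submodule.smul_mem _ a (hR c p x hx)⟩

variable {k : ℤ} {T : SimplicialChain A →ₗ[ZMod 2] SimplicialChain A}

lemma mem_controlled_of_single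
    (h : ∀ r, ∃ R, ∀ (s : Finset A) p, (∀ a ∈ s, dist (a : X) p ≤ r) →
      T (single s 1) ∈ ballChains A (s.card + k) p R) : T ∈ controlled A k := by
  intro r
  obtain ⟨R, hR⟩ := h r
  refine ⟨R, fun c p x hx => map_mem_of_mem_supported T ?_ hx⟩
  rintro s ⟨rfl, hs⟩
  exact hR s p hs

lemma comp_mem_controlled {k' j : ℤ} {T' : SimplicialChain A →ₗ[ZMod 2] SimplicialChain A}
    (hT : T ∈ controlled A k) (hT' : T' ∈ controlled A k') (hj : k' + k = j) :
    T ∘ₗ T' ∈ controlled A j := by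
  intro r
  obtain ⟨R', hR'⟩ := hT' r
  obtain ⟨R, hR⟩ := hT R'
  refine ⟨R, fun c p x hx => ?_⟩
  rw [← hj, ← add_assoc]
  exact hR _ p _ (hR' c p x hx)

lemma exists_forall_dist_le (s : Finset A) (p : X) : ∃ r, ∀ a ∈ s, dist (a : X) p ≤ r := by
  obtain ⟨r, hr⟩ := (s.image fun a : A => dist (a : X) p).exists_le
  exact ⟨r, fun a ha => hr _ (Finset.mem_image_of_mem _ ha)⟩

lemma map_single_mem_supported_card [Nonempty X] (hT : T ∈ controlled A k) (s : Finset A) :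
    T (single s 1) ∈
      supported (ZMod 2) (ZMod 2) {t : Finset A | (t.card : ℤ) = s.card + k} := by
  obtain ⟨p⟩ := ‹Nonempty X›
  obtain ⟨r, hr⟩ := exists_forall_dist_le s p
  obtain ⟨R, hR⟩ := hT r
  exact supported_mono (fun t ht => ht.1)
    (hR s.card p _ (single_mem_supported _ _ ⟨rfl, hr⟩))

lemma boundary_mem_controlled [DecidableEq A] :
    (SimplicialChain.boundary : SimplicialChain A →ₗ[ZMod 2] SimplicialChain A) ∈
      controlled A (-1) := by
  refine mem_controlled_of_single fun r => ⟨r, fun s p hs => ?_⟩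
  rw [SimplicialChain.boundary_single]
  refine Submodule.sum_mem _ fun a ha => single_mem_supported _ _ ⟨?_, fun b hb =>
    hs b (Finset.mem_of_mem_erase hb)⟩
  rw [← Finset.card_erase_add_one ha]
  push_cast
  ring

lemma exists_mem_controlled_of_coeff [Nonempty X]
    (hfinite : ∀ c r, {a : A | dist (a : X) c ≤ r}.Finite) {φ : Finset A → Finset A → ZMod 2}
    {R : ℝ} (hφ : ∀ s t, φ s t ≠ 0 → (t.card : ℤ) = s.card + k ∧
      ∀ p r, (∀ a ∈ s, dist (a : X) p ≤ r) → ∀ b ∈ t, dist (b : X) p ≤ r + R) :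
    ∃ T ∈ controlled A k, ∀ s t, T (single s 1) t = φ s t := by
  obtain ⟨p⟩ := ‹Nonempty X›
  have hsupport : ∀ s, (Function.support (φ s)).Finite := fun s => by
    obtain ⟨r, hr⟩ := exists_forall_dist_le s p
    refine (hfinite p (r + R)).toFinset.powerset.finite_toSet.subset fun t ht => ?_
    rw [Finset.mem_coe, Finset.mem_powerset]
    exact fun b hb => (Finite.mem_toFinset _).2 ((hφ s t ht).2 p r hr b hb)
  let T := linearCombination (ZMod 2) fun s => ofSupportFinite (φ s) (hsupport s)
  have hT : ∀ s t, T (single s 1) t = φ s t := fun s t => by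
    simp [T, ofSupportFinite_coe]
  refine ⟨T, mem_controlled_of_single fun r => ⟨r + R, fun s p hs => ?_⟩, hT⟩
  refine (mem_supported' _ _).2 fun t ht => ?_
  rw [hT]
  by_contra hne
  exact ht ⟨(hφ s t hne).1, (hφ s t hne).2 p r hs⟩

variable [DecidableEq A]

/-- An augmentation-preserving chain map with controlled propagation. -/
structure IsControlledChainMap (V : SimplicialChain A →ₗ[ZMod 2] SimplicialChain A) : Prop where
  mem_controlled : V ∈ controlled A 0
  map_empty : V (single ∅ 1) = single ∅ 1
  boundary_map : ∀ x, SimplicialChain.boundary (V x) = V (SimplicialChain.boundary x)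

lemma IsControlledChainMap.comp {V V' : SimplicialChain A →ₗ[ZMod 2] SimplicialChain A}
    (hV : IsControlledChainMap V) (hV' : IsControlledChainMap V') :
    IsControlledChainMap (V ∘ₗ V') where
  mem_controlled := comp_mem_controlled hV.mem_controlled hV'.mem_controlled (add_zero 0)
  map_empty := by rw [LinearMap.comp_apply, hV'.map_empty, hV.map_empty]
  boundary_map x := by
    simp only [LinearMap.comp_apply, hV.boundary_map, hV'.boundary_map]

lemma IsNet.discretize_single_mem_ballChains {w : X → A} {n : ℕ} (hw : IsNet w n) {l : List X}
    {p : X} {r : ℝ} (hl : ∀ x ∈ l, dist x p ≤ r) :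
    discretize w (single l 1) ∈ ballChains A l.length p (r + 2) := by
  refine supported_mono ?_ (discretize_single_mem_supported w l)
  rintro s ⟨hcard, hs⟩
  refine ⟨congrArg _ hcard, fun a ha => ?_⟩
  obtain ⟨x, hx, rfl⟩ := hs a ha
  linarith [dist_triangle (w x : X) x p, hw.dist_le x, hl x hx]

lemma IsStraightening.isControlledChainMap
    {u : SimplicialChain A →ₗ[ZMod 2] OrderedChain (ZMod 2) X} (hu : IsStraightening u) {w : X → A}
    {n : ℕ} (hw : IsNet w n) :
    IsControlledChainMap (discretize w ∘ₗ u) where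
  mem_controlled := mem_controlled_of_single fun r => ⟨r + 2, fun s p hs =>
    map_mem_of_mem_supported (discretize w) (fun l hl => by
      rw [add_zero, ← hl.1]
      exact hw.discretize_single_mem_ballChains fun x hx => hl.2.1 x hx p r hs)
      (hu.map_single_mem s)⟩
  map_empty := by rw [LinearMap.comp_apply, hu.map_empty, discretize_single_nil]
  boundary_map x := by
    simp only [LinearMap.comp_apply, boundary_discretize, hu.boundary_map]

end Controlled

section LocalFunctional

open Finsupp OrderedChain

variable {Λ M : Type*} [Ring Λ] [AddCommGroup M] [Module Λ M]

/-- A functional on ordered chains is local at `c` if it vanishes on every simplex of mesh at most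
`3` that is not contained in the closed ball of radius `r` around `c`. -/
def IsLocalAt (Φ : OrderedChain Λ X →ₗ[Λ] M) (c : X) (r : ℝ) : Prop :=
  ∀ l : List X, (∀ x ∈ l, ∀ y ∈ l, dist x y ≤ 3) → Φ (single l 1) ≠ 0 → ∀ x ∈ l, dist x c ≤ r

namespace IsAvoidingContraction

variable {h : ℕ → X → X} {c : X} {r R : ℝ} {Φ : OrderedChain Λ X →ₗ[Λ] M} {k : ℕ} {l : List X}

lemma map_map_eq (hh : IsAvoidingContraction h c r R) (hΦ : IsLocalAt Φ c r) {N : ℕ}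
    (hN : ∀ x, dist x c ≤ R → h N x = x) (hl : l ∈ fineLists univ 1 k) :
    Φ (map (h N) (single l 1)) = Φ (single l 1) := by
  rw [map_single]
  by_cases hnear : ∀ x ∈ l, dist x c ≤ R
  · rw [List.map_congr_left fun x hx => hN x (hnear x hx), List.map_id']
  · push Not at hnear
    obtain ⟨x, hx, hxR⟩ := hnear
    have hmesh := hl.2.2
    rw [not_imp_comm.1 (hΦ l fun y hy z hz => by linarith [hmesh y hy z hz])
        fun h => (h x hx).not_gt (hh.lt_dist_self hxR),
      not_imp_comm.1 (hΦ (l.map (h N)) ?_)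
        fun H => (H _ (List.mem_map_of_mem hx)).not_gt (hh.lt_dist N x hxR)]
    simp only [List.forall_mem_map]
    intro y hy z hz
    have hlip := (hh.lipschitzWith N).dist_le_mul y z
    push_cast at hlip
    linarith [hmesh y hy z hz]

lemma map_map_zero_eq_zero (hh : IsAvoidingContraction h c r R) (hΦ : IsLocalAt Φ c r)
    (hl : l ≠ []) : Φ (map (h 0) (single l 1)) = 0 := by
  obtain ⟨b, hb, hconst⟩ := hh.exists_base
  obtain ⟨x, hx⟩ := List.exists_mem_of_ne_nil l hl
  rw [map_single]
  refine not_imp_comm.1 (hΦ (l.map (h 0)) ?_)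
    fun H => (H b (List.mem_map.2 ⟨x, hx, hconst x⟩)).not_gt hb
  simp [hconst]

/-- The prism formula exhibits `Φ ∘ₗ iteratedPrism h N` as a primitive of the cocycle `Φ`. -/
lemma map_eq_map_iteratedPrism_boundary (hh : IsAvoidingContraction h c r R)
    (hΦ : IsLocalAt Φ c r) {N : ℕ} (hN : ∀ x, dist x c ≤ R → h N x = x)
    (hcocycle : ∀ l : List X, l.length = k + 2 → Φ (boundary (single l 1)) = 0)
    {z : OrderedChain Λ X} (hz : z ∈ supported Λ Λ (fineLists univ 1 (k + 1))) :
    Φ z = Φ (iteratedPrism h N (boundary z)) := by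
  refine map_eq_of_mem_supported (T' := Φ ∘ₗ iteratedPrism h N ∘ₗ boundary) (fun l hl => ?_) hz
  have hlength := hl.1
  have hprism : Φ (boundary (iteratedPrism h N (single l 1))) = 0 := by
    refine map_eq_of_mem_supported (T := Φ ∘ₗ boundary) (T' := 0) ?_
      (iteratedPrism_single_mem_supported h N l)
    rintro l' ⟨i, -, hl'⟩
    exact hcocycle l' (by rw [hl'.1, hlength])
  have hformula :=
    congrArg Φ (boundary_iteratedPrism_add_iteratedPrism_boundary h N (single l (1 : Λ)))
  rw [map_add, map_sub, hprism, zero_add, hh.map_map_eq hΦ hN hl,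
    hh.map_map_zero_eq_zero hΦ (by rintro rfl; simp at hlength), sub_zero] at hformula
  exact hformula.symm

/-- A prism simplex on which `Φ` does not vanish is close to both `a` and `c`, so the vertex of `l`
below it has not been moved far. -/
lemma exists_dist_le_of_map_iteratedPrism_ne_zero (hh : IsAvoidingContraction h c r R)
    (hΦ : IsLocalAt Φ c r) {a : X} (hΦa : IsLocalAt Φ a r) {N : ℕ}
    (hl : ∀ x ∈ l, ∀ y ∈ l, dist x y < 1) (hne : Φ (iteratedPrism h N (single l 1)) ≠ 0) :
    ∃ x ∈ l, dist x a ≤ R + 2 * r := by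
  obtain ⟨l', hl', hne'⟩ := exists_map_single_ne_zero Φ hne
  obtain ⟨i, -, hprism⟩ :=
    (mem_supported Λ _).1 (iteratedPrism_single_mem_supported h N l) hl'
  have hmesh : ∀ x' ∈ l', ∀ y' ∈ l', dist x' y' ≤ 3 := fun x' hx' y' hy' => by
    obtain ⟨x, hx, y, hy, hxy⟩ :=
      hprism.dist_le (hh.lipschitzWith i) (hh.lipschitzWith (i + 1)) hx' hy'
    push_cast at hxy
    linarith [hl x hx y hy, hh.dist_succ_le i y]
  obtain ⟨x', hx'⟩ := List.exists_mem_of_length_pos (l := l') (by rw [hprism.1]; omega)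
  obtain ⟨x, hx, hx'x⟩ := hprism.2 x' hx'
  have hc := hΦ l' hmesh hne' x' hx'
  have hnear : dist x c ≤ R := by
    by_contra! hfar
    rcases hx'x with rfl | rfl
    · exact hc.not_gt (hh.lt_dist i x hfar)
    · exact hc.not_gt (hh.lt_dist (i + 1) x hfar)
  refine ⟨x, hx, ?_⟩
  linarith [dist_triangle x c a, dist_triangle_left c a x', hΦa l' hmesh hne' x' hx']

end IsAvoidingContraction

/-- In other words, the coarse cohomology of `X` vanishes, with uniform control of supports. -/
lemma HasAvoidingContractions.exists_primitive (hX : HasAvoidingContractions X) (r : ℝ) :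
    ∃ ρ, ∀ {Φ : OrderedChain Λ X →ₗ[Λ] M} {c : X} {k : ℕ}, IsLocalAt Φ c r →
      (∀ l : List X, l.length = k + 2 → Φ (boundary (single l 1)) = 0) →
      ∃ Ψ : OrderedChain Λ X →ₗ[Λ] M,
        (∀ z ∈ supported Λ Λ (fineLists univ 1 (k + 1)), Φ z = Ψ (boundary z)) ∧
        ∀ a, IsLocalAt Φ a r → ∀ l : List X, (∀ x ∈ l, ∀ y ∈ l, dist x y < 1) →
          Ψ (single l 1) ≠ 0 → ∃ x ∈ l, dist x a ≤ ρ := by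
  obtain ⟨R, hR⟩ := hX r
  refine ⟨R + 2 * r, fun {Φ c k} hΦ hcocycle => ?_⟩
  obtain ⟨h, hh⟩ := hR c
  obtain ⟨N, hN⟩ := hh.eq_self R
  exact ⟨Φ ∘ₗ iteratedPrism h N,
    fun z hz => hh.map_eq_map_iteratedPrism_boundary hΦ hN hcocycle hz,
    fun a hΦa l hl hne => hh.exists_dist_le_of_map_iteratedPrism_ne_zero hΦ hΦa hl hne⟩

lemma IsNet.exists_isLocalAt {A : Set X} [DecidableEq A] {w : X → A} {n : ℕ} (hw : IsNet w n)
    {k : ℤ} {D : SimplicialChain A →ₗ[ZMod 2] SimplicialChain A} (hD : D ∈ controlled A k) :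
    ∃ r, ∀ (t : Finset A), ∀ a ∈ t, IsLocalAt (lapply t ∘ₗ D ∘ₗ discretize w) (a : X) r := by
  obtain ⟨r, hr⟩ := hD (3 + 2)
  refine ⟨r, fun t a ha l hl hne x hx => ?_⟩
  have hmem := hr _ x _ (hw.discretize_single_mem_ballChains fun y hy => hl y hy x hx)
  rw [dist_comm]
  exact ((mem_supported _ _).1 hmem (mem_support_iff.2 hne)).2 a ha

end LocalFunctional

section NullHomotopy

open Finsupp

lemma SimplicialChain.map_eq_zero_of_card_le {α M : Type*} [AddCommMonoid M] [Module (ZMod 2) M]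
    {T : SimplicialChain α →ₗ[ZMod 2] M} {d c : ℕ}
    (hT : ∀ s : Finset α, d ≤ s.card → T (single s 1) = 0) (hc : d ≤ c)
    {x : SimplicialChain α} (hx : x ∈ supported (ZMod 2) (ZMod 2) {s : Finset α | s.card = c}) :
    T x = 0 :=
  map_eq_of_mem_supported (T' := (0 : SimplicialChain α →ₗ[ZMod 2] M))
    (fun s hs => hT s (hc.trans_eq hs.symm)) hx

lemma map_discretize_boundary_eq_zero {α β : Type*} [DecidableEq β] {w : α → β}
    {D : SimplicialChain β →ₗ[ZMod 2] SimplicialChain β} {d : ℕ}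
    (hDboundary : ∀ x, SimplicialChain.boundary (D x) = D (SimplicialChain.boundary x))
    (hDzero : ∀ s : Finset β, d ≤ s.card → D (single s 1) = 0) {l : List α} (hl : l.length = d) :
    D (discretize w (OrderedChain.boundary (single l 1))) = 0 := by
  rw [← boundary_discretize, ← hDboundary, SimplicialChain.map_eq_zero_of_card_le hDzero hl.ge
    (supported_mono (fun s hs => hs.1) (discretize_single_mem_supported w l)),
    LinearMap.map_zero]

variable {A : Set X} [DecidableEq A]

/-- Some controlled chain map is null-homotopic, by a controlled homotopy, on all simplices with at
least `j` vertices. -/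
def HasNullHomotopyFrom (A : Set X) [DecidableEq A] (j : ℕ) : Prop :=
  ∃ V, IsControlledChainMap V ∧ ∃ S ∈ controlled A 1, S (single ∅ 1) = 0 ∧
    ∀ s : Finset A, j ≤ s.card → V (single s 1) =
      SimplicialChain.boundary (S (single s 1)) + S (SimplicialChain.boundary (single s 1))

lemma not_hasNullHomotopyFrom_one [Nonempty A] : ¬ HasNullHomotopyFrom A 1 := by
  rintro ⟨V, hV, S, -, hS, hVS⟩
  obtain ⟨a⟩ := ‹Nonempty A›
  have ha : SimplicialChain.boundary (single {a} 1) = single (∅ : Finset A) 1 := by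
    simp [SimplicialChain.boundary_single]
  have h := hV.boundary_map (single {a} 1)
  rw [hVS {a} (by simp), ha, hS, add_zero, SimplicialChain.boundary_boundary, hV.map_empty] at h
  exact one_ne_zero (single_eq_zero.1 h.symm)

variable {w : X → A} {n d : ℕ} {u : SimplicialChain A →ₗ[ZMod 2] OrderedChain (ZMod 2) X}
  {D : SimplicialChain A →ₗ[ZMod 2] SimplicialChain A}

lemma IsStraightening.discretize_map_single_mem [Nonempty X] (hu : IsStraightening u)
    (hw : IsNet w n) (s : Finset A) :
    discretize w (u (single s 1)) ∈
      supported (ZMod 2) (ZMod 2) {t : Finset A | t.card = s.card} := by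
  simpa using map_single_mem_supported_card (hu.isControlledChainMap hw).mem_controlled s

lemma HasAvoidingContractions.exists_primitive_coeff [Nonempty X]
    (hX : HasAvoidingContractions X) (hw : IsNet w n) (hu : IsStraightening u)
    (hD : D ∈ controlled A 0)
    (hDboundary : ∀ x, SimplicialChain.boundary (D x) = D (SimplicialChain.boundary x))
    (hDzero : ∀ s : Finset A, d + 2 ≤ s.card → D (single s 1) = 0) :
    ∃ ρ, ∀ t : Finset A, ∃ ψ : SimplicialChain A →ₗ[ZMod 2] ZMod 2,
      (∀ s : Finset A, s.card = d + 1 →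
        D (discretize w (u (single s 1))) t = ψ (SimplicialChain.boundary (single s 1))) ∧
      ∀ s, ψ (single s 1) ≠ 0 → s.Nonempty ∧ t.card = d + 1 ∧
        ∀ b ∈ t, ∃ x ∈ simplexHull s, dist x (b : X) ≤ ρ := by
  obtain ⟨r, hlocal⟩ := hw.exists_isLocalAt hD
  obtain ⟨ρ, hρ⟩ := hX.exists_primitive (Λ := ZMod 2) (M := ZMod 2) r
  refine ⟨ρ, fun t => ?_⟩
  by_cases ht : t.card = d + 1
  · obtain ⟨c, hc⟩ := Finset.card_pos.1 (by rw [ht]; exact d.succ_pos)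
    obtain ⟨Ψ, hΨ, hnear⟩ := hρ (hlocal t c hc) (k := d) fun l hl => by
      simp only [LinearMap.comp_apply, map_discretize_boundary_eq_zero hDboundary hDzero hl,
        LinearMap.map_zero]
    refine ⟨Ψ ∘ₗ u, fun s hs => ?_, fun s hne => ?_⟩
    · rw [LinearMap.comp_apply, ← hu.boundary_map, ← hΨ]
      · rfl
      · rw [← hs]
        exact supported_mono (fineLists_mono (subset_univ _) le_rfl _) (hu.map_single_mem s)
    · obtain ⟨l, hl, hne'⟩ := exists_map_single_ne_zero Ψ hne
      obtain ⟨hlength, hhull, hmesh⟩ := (mem_supported _ _).1 (hu.map_single_mem s) hl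
      have hnear' : ∀ b ∈ t, ∃ x ∈ l, dist x (b : X) ≤ ρ := fun b hb =>
        hnear b (hlocal t b hb) l hmesh hne'
      obtain ⟨x, hx, -⟩ := hnear' c hc
      exact ⟨Finset.card_pos.1 (hlength ▸ List.length_pos_of_mem hx), ht, fun b hb =>
        let ⟨x, hx, hxb⟩ := hnear' b hb
        ⟨x, hhull x hx, hxb⟩⟩
  · refine ⟨0, fun s hs => ?_, fun _ h => absurd rfl h⟩
    have hcard := map_single_mem_supported_card
      (comp_mem_controlled hD (hu.isControlledChainMap hw).mem_controlled (add_zero 0)) s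
    refine (mem_supported' _ _).1 hcard t fun h => ht ?_
    have h' : (t.card : ℤ) = s.card + 0 := h
    omega

lemma HasAvoidingContractions.exists_boundary_factorization [Nonempty X]
    (hX : HasAvoidingContractions X) (hw : IsNet w n) (hu : IsStraightening u)
    (hD : D ∈ controlled A 0)
    (hDboundary : ∀ x, SimplicialChain.boundary (D x) = D (SimplicialChain.boundary x))
    (hDzero : ∀ s : Finset A, d + 2 ≤ s.card → D (single s 1) = 0) :
    ∃ S ∈ controlled A 1, S (single ∅ 1) = 0 ∧ (∀ s : Finset A, s.card ≠ d → S (single s 1) = 0) ∧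
      ∀ s : Finset A, d + 1 ≤ s.card →
        D (discretize w (u (single s 1))) = S (SimplicialChain.boundary (single s 1)) := by
  obtain ⟨ρ, hρ⟩ := hX.exists_primitive_coeff hw hu hD hDboundary hDzero
  choose ψ hψ hnear using hρ
  obtain ⟨S, hS, hSψ⟩ := exists_mem_controlled_of_coeff (k := 1) (R := ρ) hw.finite
    (φ := fun s t => if s.card = d then ψ t (single s 1) else 0) fun s t hne => by
      obtain ⟨hs, hne⟩ := ite_ne_right_iff.1 hne
      obtain ⟨-, ht, hclose⟩ := hnear t s hne
      refine ⟨by rw [ht, hs]; push_cast; rfl, fun p r hr b hb => ?_⟩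
      obtain ⟨x, hx, hxb⟩ := hclose b hb
      linarith [dist_triangle_left (b : X) p x, hx p r hr]
  have hSzero : ∀ s : Finset A, s.card ≠ d → S (single s 1) = 0 := fun s hs => by
    ext t
    rw [hSψ, if_neg hs, Finsupp.zero_apply]
  refine ⟨S, hS, ?_, hSzero, fun s hs => ?_⟩
  · ext t
    rw [hSψ, Finsupp.zero_apply, ite_eq_right_iff]
    intro _
    by_contra hne
    exact Finset.not_nonempty_empty (hnear t ∅ hne).1
  · have hface : ∀ a ∈ s, (s.erase a).card + 1 = s.card := fun a ha =>
      Finset.card_erase_add_one ha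
    rcases hs.eq_or_lt with hs | hs
    · ext t
      rw [hψ t s hs.symm, SimplicialChain.map_boundary_single, ← lapply_apply (R := ZMod 2) t,
        ← LinearMap.comp_apply, SimplicialChain.map_boundary_single]
      refine Finset.sum_congr rfl fun a ha => ?_
      rw [LinearMap.comp_apply, lapply_apply, hSψ, if_pos (by have := hface a ha; omega)]
    · rw [SimplicialChain.map_eq_zero_of_card_le hDzero hs (hu.discretize_map_single_mem hw s),
        SimplicialChain.map_boundary_single]
      exact (Finset.sum_eq_zero fun a ha => hSzero _ (by have := hface a ha; omega)).symm

/-- Modulo 2 the defect `D = V + ∂S + S∂` is a chain map. It vanishes on simplices with at least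
`d + 2` vertices, so its coefficients on `d + 1` vertices are cocycles, and their primitives
correct `S`. -/
lemma HasNullHomotopyFrom.descend [Nonempty X] (hA : HasNullHomotopyFrom A (d + 2))
    (hX : HasAvoidingContractions X) (hw : IsNet w n) (hu : IsStraightening u) :
    HasNullHomotopyFrom A (d + 1) := by
  obtain ⟨V, hV, S, hS, hS_empty, hVS⟩ := hA
  have hboundaryS : SimplicialChain.boundary ∘ₗ S ∈ controlled A 0 :=
    comp_mem_controlled boundary_mem_controlled hS (add_neg_cancel 1)
  have hSboundary : S ∘ₗ SimplicialChain.boundary ∈ controlled A 0 :=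
    comp_mem_controlled hS boundary_mem_controlled (neg_add_cancel 1)
  obtain ⟨D, hD, hDapply⟩ : ∃ D ∈ controlled A 0, ∀ x, D x =
      V x + (SimplicialChain.boundary (S x) + S (SimplicialChain.boundary x)) :=
    ⟨_, Submodule.add_mem _ hV.mem_controlled (Submodule.add_mem _ hboundaryS hSboundary),
      fun _ => rfl⟩
  have hDboundary : ∀ x, SimplicialChain.boundary (D x) = D (SimplicialChain.boundary x) := by
    intro x
    simp only [hDapply, map_add, SimplicialChain.boundary_boundary, hV.boundary_map,
      LinearMap.map_zero, zero_add, add_zero]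
  have hDzero : ∀ s : Finset A, d + 2 ≤ s.card → D (single s 1) = 0 := fun s hs => by
    rw [hDapply, hVS s hs, ZModModule.add_self]
  obtain ⟨S', hS', hS'_empty, hS'_zero, hS'_boundary⟩ :=
    hX.exists_boundary_factorization hw hu hD hDboundary hDzero
  have hv := hu.isControlledChainMap hw
  refine ⟨V ∘ₗ discretize w ∘ₗ u, hV.comp hv, S ∘ₗ (discretize w ∘ₗ u) + S',
    Submodule.add_mem _ (comp_mem_controlled hS hv.mem_controlled (zero_add 1)) hS', ?_,
    fun s hs => ?_⟩
  · rw [LinearMap.add_apply, LinearMap.comp_apply, hv.map_empty, hS_empty, hS'_empty, add_zero]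
  · have hboundary := hv.boundary_map (single s 1)
    have hdefect := hS'_boundary s hs
    simp only [LinearMap.comp_apply, LinearMap.add_apply] at hboundary ⊢
    rw [hDapply, hboundary, ← sub_eq_zero] at hdefect
    rw [hS'_zero s (by omega), add_zero, ← sub_eq_zero, ← hdefect]
    simp only [ZModModule.sub_eq_add]
    abel

lemma IsStraightening.hasNullHomotopyFrom (hu : IsStraightening u) (hw : IsNet w n)
    (hcollapse : ∀ t : Finset A, (∀ a ∈ t, ∀ b ∈ t, dist (a : X) b ≤ 5) → d ≤ t.card →
      discretize w (u (single t 1)) = 0) : HasNullHomotopyFrom A d := by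
  have hv := hu.isControlledChainMap hw
  refine ⟨_, hv.comp hv, 0, Submodule.zero_mem _, rfl, fun s hs => ?_⟩
  have hZ : ∀ l ∈ fineLists (simplexHull s) 1 s.card, discretize w (single l 1) ∈
      supported (ZMod 2) (ZMod 2)
        {t : Finset A | (∀ a ∈ t, ∀ b ∈ t, dist (a : X) b ≤ 5) ∧ d ≤ t.card} := by
    rintro l ⟨hlength, -, hmesh⟩
    refine supported_mono ?_ (discretize_single_mem_supported w l)
    rintro t ⟨hcard, ht⟩
    refine ⟨fun a ha b hb => ?_, by omega⟩
    obtain ⟨x, hx, rfl⟩ := ht a ha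
    obtain ⟨y, hy, rfl⟩ := ht b hb
    linarith [dist_triangle4_right (w x : X) (w y : X) x y, hmesh x hx y hy, hw.dist_le x,
      hw.dist_le y]
  have hvanish := map_eq_of_mem_supported (T := discretize w ∘ₗ u)
    (T' := (0 : SimplicialChain A →ₗ[ZMod 2] SimplicialChain A))
    (fun t ht => hcollapse t ht.1 ht.2)
    (map_mem_of_mem_supported (discretize w) hZ (hu.map_single_mem s))
  simpa using hvanish

end NullHomotopy

lemma IsCCC.not_hasAvoidingContractions [ProperSpace X] [Nonempty X] {σ : X → X → ℝ → X}
    (hσ : IsCCC σ) (hdim : FiniteCoveringDimension X) : ¬ HasAvoidingContractions X := by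
  classical
  intro hX
  obtain ⟨A, w, n, hw⟩ := hdim.exists_isNet
  obtain ⟨u, hu, hcollapse⟩ := hσ.exists_isStraightening hw 5
  have hdescend : ∀ d, HasNullHomotopyFrom A (d + 1) → HasNullHomotopyFrom A 1 := by
    intro d
    induction d with
    | zero => exact id
    | succ d ih => exact fun h => ih (h.descend hX hw hu)
  have : Nonempty A := ‹Nonempty X›.map w
  exact not_hasNullHomotopyFrom_one (hdescend (n + 1) (hu.hasNullHomotopyFrom hw hcollapse))

theorem almost_geodesically_complete_general
    {G : Type*} [Group G] [MulAction G X] [IsIsometricSMul G X] [ProperSpace X] [NoncompactSpace X]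
    (hdim : FiniteCoveringDimension X) (σ : X → X → ℝ → X) (hσ : IsCCC σ)
    (hcocompact : ∃ K : Set X, IsCompact K ∧ ∀ x : X, ∃ g : G, x ∈ g • K) :
    ∃ C : ℝ, 0 ≤ C ∧ ∀ o x : X, ∃ ξ : ℝ → X,
      IsRay σ ξ ∧ ξ 0 = o ∧ ∃ t : ℝ, 0 ≤ t ∧ dist (ξ t) x ≤ C := by
  by_contra! hrays
  have : Nonempty X := let ⟨o, _⟩ := hrays 0 le_rfl; ⟨o⟩
  exact hσ.not_hasAvoidingContractions hdim (hσ.hasAvoidingContractions hcocompact hrays)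

/-- **Almost geodesic completeness** (Theorem E / Theorem `agcc3`): if a proper,
finite-dimensional geodesic metric space with a ccc geodesic bicombing admits a cocompact
isometric group action and carries two non-asymptotic `σ`-rays, then it is almost
`σ`-geodesically complete. -/
theorem almost_geodesically_complete
    {G : Type*} [Group G] [MulAction G X] [ProperSpace X]
    (hgeo : IsGeodesicSpace X)
    (hdim : FiniteCoveringDimension X)
    (σ : X → X → ℝ → X) (hσ : IsCCC σ)
    (hiso : ∀ g : G, Isometry (fun x : X => g • x))
    (hcocompact : ∃ K : Set X, IsCompact K ∧ ∀ x : X, ∃ g : G, x ∈ g • K)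
    (hrays : ∃ ξ ζ : ℝ → X, IsRay σ ξ ∧ IsRay σ ζ ∧ ¬ Asymptotic ξ ζ) :
    ∃ (o : X) (C : ℝ), 0 ≤ C ∧ ∀ x : X, ∃ ξ : ℝ → X,
      IsRay σ ξ ∧ ξ 0 = o ∧ ∃ t : ℝ, 0 ≤ t ∧ dist (ξ t) x ≤ C := by
  obtain ⟨ξ, -, hξ, -⟩ := hrays
  have : IsIsometricSMul G X := ⟨hiso⟩
  have : NoncompactSpace X := hξ.noncompactSpace
  obtain ⟨C, hC, h⟩ := almost_geodesically_complete_general hdim σ hσ hcocompact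
  exact ⟨ξ 0, C, hC, h (ξ 0)⟩
end

section
/- Let G be a group acting by isometries on a proper metric space (X,d), with the action proper and cocompact, and let σ be a ccc, reversible, G-equivariant geodesic bicombing on X. If G contains a subgroup A isomorphic to ℤⁿ for some n ≥ 1, then for any basepoint o ∈ X there is a topological embedding of the Euclidean sphere S^{n−1} into the set of σ-rays emanating from o, metrized by d_o (which is a metric on this set). Moreover, if A has finite index in G, then the set of σ-rays emanating from o with the metric d_o is homeomorphic to S^{n−1}. -/
/-!
Write `‖g‖ = d(g • o, o)` and let `C` be the centralizer of `A ≅ ℤⁿ`. The points displaced by the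
generators of `A` at most as far as `o` is form a convex set on which `C` acts coboundedly, so `C`
is finitely generated. Repeating this for generators of `C` shows that the centralizer `B ≥ A` of
`C`, which is abelian, acts coboundedly on a convex set `Y`.

If the `σ`-midpoint of `b • o` and `b⁻¹ • o` lies near `c • o` with `c ∈ B`, then iterating
`x ↦ midpoint of b • x and b⁻¹ • x` stays near the powers of `c`. Convexity makes these iterates
drift no faster than a random walk, so `‖c ^ N‖` grows like `√N`. On the other hand some point of
`Y` is displaced by `c` at most `‖c ^ N‖ / N`, so `‖c‖` is bounded independently of `b`.
Hence the orbit map `ℤⁿ → X` sends midpoints to within a uniform distance of `σ`-midpoints.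

A map `ℝⁿ → X` with this property is, on each segment, uniformly close to the `σ`-geodesic between
the images of the endpoints, so its rescalings towards `o` form a Cauchy sequence; the limit `Q`
maps segments from the origin to `σ`-geodesics. The rays `t ↦ Q (t • v)`, reparametrized by arc
length, give the sphere. If `A` has finite index then `Q` is coarsely onto, and every `σ`-ray from
`o` is a limit of such rays.
-/

open Metric Set

variable {X : Type*} [MetricSpace X]

open scoped Pointwise

/-- A bicombing is reversible. -/
def IsReversible (σ : X → X → ℝ → X) : Prop :=
  ∀ x y : X, ∀ t ∈ Set.Icc (0 : ℝ) 1, σ x y t = σ y x (1 - t)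

/-- The metric `d_o` on rays emanating from `o`:
`d_o(ξ,ζ) = ∑_{n ≥ 1} 2⁻ⁿ · min(d(ξ(n),ζ(n)), 1)`. -/
noncomputable def dO (o : X) (ξ ζ : ℝ → X) : ℝ :=
  ∑' n : ℕ, (1 / 2 : ℝ) ^ (n + 1) * min (dist (ξ ((n : ℝ) + 1)) (ζ ((n : ℝ) + 1))) 1

open Filter Topology
open scoped NNReal

section Bicombing

variable {σ : X → X → ℝ → X}

namespace IsGeodesicBicombing

theorem apply_zero (h : IsGeodesicBicombing σ) (x y : X) : σ x y 0 = x := h.2.1 x y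

theorem apply_one (h : IsGeodesicBicombing σ) (x y : X) : σ x y 1 = y := h.2.2.1 x y

theorem dist_apply_apply (h : IsGeodesicBicombing σ) (x y : X) {s t : ℝ} (hs : s ∈ Icc (0 : ℝ) 1)
    (ht : t ∈ Icc (0 : ℝ) 1) : dist (σ x y s) (σ x y t) = |s - t| * dist x y :=
  h.2.2.2 x y s hs t ht

theorem dist_left_apply (h : IsGeodesicBicombing σ) (x y : X) {t : ℝ} (ht : t ∈ Icc (0 : ℝ) 1) :
    dist x (σ x y t) = t * dist x y := by
  have := h.dist_apply_apply x y (left_mem_Icc.2 zero_le_one) ht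
  rwa [h.apply_zero, zero_sub, abs_neg, abs_of_nonneg ht.1] at this

theorem apply_self (h : IsGeodesicBicombing σ) (x : X) {t : ℝ} (ht : t ∈ Icc (0 : ℝ) 1) :
    σ x x t = x := by
  have := h.dist_left_apply x x ht
  rw [dist_self, mul_zero] at this
  exact (dist_eq_zero.1 this).symm

end IsGeodesicBicombing

theorem IsConical.dist_apply_left_le (h : IsConical σ) (o x y : X) {t : ℝ}
    (ht : t ∈ Icc (0 : ℝ) 1) : dist (σ o x t) (σ o y t) ≤ t * dist x y := by
  simpa using h o x o y t ht

theorem IsConical.dist_apply_le_max (h : IsConical σ) (x y x' y' : X) {t : ℝ}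
    (ht : t ∈ Icc (0 : ℝ) 1) : dist (σ x y t) (σ x' y' t) ≤ max (dist x x') (dist y y') := by
  refine (h x y x' y' t ht).trans ?_
  have hx := mul_le_mul_of_nonneg_left (le_max_left (dist x x') (dist y y')) (sub_nonneg.2 ht.2)
  have hy := mul_le_mul_of_nonneg_left (le_max_right (dist x x') (dist y y')) ht.1
  linarith

theorem IsConical.dist_apply_half_le (h : IsConical σ) (x y x' y' : X) :
    dist (σ x y (1 / 2)) (σ x' y' (1 / 2)) ≤ (dist x x' + dist y y') / 2 := by
  have := h x y x' y' (1 / 2) ⟨by norm_num, by norm_num⟩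
  linarith

theorem IsConsistent.apply_apply_left (hc : IsConsistent σ) (h : IsGeodesicBicombing σ) (x y : X)
    {s t : ℝ} (hs : s ∈ Icc (0 : ℝ) 1) (ht : t ∈ Icc (0 : ℝ) 1) :
    σ x (σ x y t) s = σ x y (s * t) := by
  simpa [h.apply_zero] using hc x y 0 t s le_rfl ht.1 ht.2 hs

omit [MetricSpace X] in
theorem IsConsistent.apply_apply_half (hc : IsConsistent σ) (x y : X) {s t : ℝ}
    (hs : 0 ≤ s) (hst : s ≤ t) (ht : t ≤ 1) :
    σ (σ x y s) (σ x y t) (1 / 2) = σ x y ((s + t) / 2) := by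
  rw [hc x y s t (1 / 2) hs hst ht ⟨by norm_num, by norm_num⟩]
  ring_nf

end Bicombing

section RayMetric

variable {σ : X → X → ℝ → X} {o : X} {ξ ζ θ : ℝ → X}

theorem dO_term_nonneg (ξ ζ : ℝ → X) (n : ℕ) :
    0 ≤ (1 / 2 : ℝ) ^ (n + 1) * min (dist (ξ ((n : ℝ) + 1)) (ζ ((n : ℝ) + 1))) 1 :=
  mul_nonneg (by positivity) (le_min dist_nonneg zero_le_one)

theorem dO_summable (ξ ζ : ℝ → X) : Summable fun n : ℕ =>
    (1 / 2 : ℝ) ^ (n + 1) * min (dist (ξ ((n : ℝ) + 1)) (ζ ((n : ℝ) + 1))) 1 :=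
  .of_nonneg_of_le (dO_term_nonneg ξ ζ)
    (fun _ => mul_le_of_le_one_right (by positivity) (min_le_right _ _))
    ((summable_nat_add_iff 1).2 summable_geometric_two)

theorem dO_nonneg (o : X) (ξ ζ : ℝ → X) : 0 ≤ dO o ξ ζ := tsum_nonneg (dO_term_nonneg ξ ζ)

theorem dO_self (o : X) (ξ : ℝ → X) : dO o ξ ξ = 0 := by simp [dO]

theorem dO_comm (o : X) (ξ ζ : ℝ → X) : dO o ξ ζ = dO o ζ ξ := by simp only [dO, dist_comm]

theorem min_add_le_min_add_min {a b c : ℝ} (ha : 0 ≤ a) (hb : 0 ≤ b) (hc : 0 ≤ c) :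
    min (a + b) c ≤ min a c + min b c := by
  rcases le_total a c with h | h
  · rcases le_total b c with h' | h' <;> simp [*]
  · rw [min_eq_right h]
    exact (min_le_right _ _).trans (le_add_of_nonneg_right (le_min hb hc))

theorem dO_triangle (o : X) (ξ ζ θ : ℝ → X) : dO o ξ θ ≤ dO o ξ ζ + dO o ζ θ := by
  rw [dO, dO, dO, ← (dO_summable ξ ζ).tsum_add (dO_summable ζ θ)]
  refine (dO_summable ξ θ).tsum_le_tsum (fun n => ?_) ((dO_summable ξ ζ).add (dO_summable ζ θ))
  rw [← mul_add]
  gcongr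
  exact (min_le_min_right 1 (dist_triangle _ _ _)).trans
    (min_add_le_min_add_min dist_nonneg dist_nonneg zero_le_one)

theorem dO_eq_zero_iff_forall_nat :
    dO o ξ ζ = 0 ↔ ∀ n : ℕ, ξ ((n : ℝ) + 1) = ζ ((n : ℝ) + 1) := by
  rw [dO, ← (dO_summable ξ ζ).hasSum_iff, hasSum_zero_iff_of_nonneg (dO_term_nonneg ξ ζ),
    funext_iff]
  refine forall_congr' fun n => ?_
  simpa [min_eq_iff] using fun h => (dist_eq_zero.2 h).trans_le zero_le_one

theorem hasSum_half_pow_mul_succ : HasSum (fun n : ℕ => (1 / 2 : ℝ) ^ (n + 1) * (n + 1)) 2 := by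
  have h := hasSum_coe_mul_geometric_of_norm_lt_one (𝕜 := ℝ) (r := 1 / 2) (by norm_num)
  rw [← hasSum_nat_add_iff' 1, show (1 / 2 / (1 - 1 / 2) ^ 2 - ∑ i ∈ Finset.range 1,
    (i : ℝ) * (1 / 2) ^ i : ℝ) = 2 by norm_num] at h
  simpa [mul_comm] using h

theorem dO_le_two_mul {c : ℝ} (h : ∀ t, 0 ≤ t → dist (ξ t) (ζ t) ≤ t * c) :
    dO o ξ ζ ≤ 2 * c := by
  rw [dO, ← (hasSum_half_pow_mul_succ.mul_right c).tsum_eq]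
  refine (dO_summable ξ ζ).tsum_le_tsum (fun n => ?_)
    (hasSum_half_pow_mul_succ.mul_right c).summable
  rw [mul_assoc]
  gcongr
  exact (min_le_left _ _).trans (h _ (by positivity))

namespace IsRay

theorem dist_apply_apply (h : IsRay σ ξ) {s t : ℝ} (hs : 0 ≤ s) (ht : 0 ≤ t) :
    dist (ξ s) (ξ t) = |s - t| := h.2.1 s t hs ht

theorem apply_mul (h : IsRay σ ξ) {s t : ℝ} (hs : s ∈ Icc (0 : ℝ) 1) (ht : 0 ≤ t) :
    σ (ξ 0) (ξ t) s = ξ (s * t) := h.2.2 t ht s hs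

theorem ext_of_forall_nonneg (hξ : IsRay σ ξ) (hζ : IsRay σ ζ) (h : ∀ t, 0 ≤ t → ξ t = ζ t) :
    ξ = ζ := by
  funext t
  rcases le_total t 0 with ht | ht
  · rw [hξ.1 t ht, hζ.1 t ht, h 0 le_rfl]
  · exact h t ht

theorem ext_of_forall_nat (hξ : IsRay σ ξ) (hζ : IsRay σ ζ) (h0 : ξ 0 = ζ 0)
    (h : ∀ n : ℕ, ξ ((n : ℝ) + 1) = ζ ((n : ℝ) + 1)) : ξ = ζ := by
  refine hξ.ext_of_forall_nonneg hζ fun t ht => ?_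
  obtain ⟨n, hn⟩ := exists_nat_ge t
  have hn1 : (0 : ℝ) < n + 1 := by positivity
  have hmem : t / (n + 1) ∈ Icc (0 : ℝ) 1 := ⟨by positivity, (div_le_one hn1).2 (by linarith)⟩
  rw [← div_mul_cancel₀ t hn1.ne', ← hξ.apply_mul hmem hn1.le, ← hζ.apply_mul hmem hn1.le, h0, h n]

theorem dO_eq_zero_iff (hξ : IsRay σ ξ) (hζ : IsRay σ ζ) (h0 : ξ 0 = ζ 0) :
    dO o ξ ζ = 0 ↔ ξ = ζ :=
  ⟨fun h => hξ.ext_of_forall_nat hζ h0 (dO_eq_zero_iff_forall_nat.1 h), fun h => h ▸ dO_self o ξ⟩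

end IsRay

end RayMetric

section Displacement

variable {G : Type*} [Group G] [MulAction G X] [IsIsometricSMul G X]

/-- The displacement `g ↦ d(g • o, o)` of a point `o` under an isometric action, as a seminorm on
the acting group. -/
def displacement (G : Type*) [Group G] [MulAction G X] [IsIsometricSMul G X] (o : X) :
    GroupSeminorm G where
  toFun g := dist (g • o) o
  map_one' := by simp
  mul_le' g h := by
    have := dist_triangle ((g * h) • o) (g • o) o
    rwa [mul_smul, dist_smul, ← mul_smul, add_comm] at this
  inv' g := by rw [← dist_smul g, smul_inv_smul, dist_comm]

@[simp]
theorem displacement_apply (o : X) (g : G) : displacement G o g = dist (g • o) o := rfl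

theorem dist_smul_smul_eq (g h : G) (o : X) :
    dist (g • o) (h • o) = dist ((h⁻¹ * g) • o) o := by
  rw [← dist_smul h ((h⁻¹ * g) • o), smul_smul, mul_inv_cancel_left]

theorem groupSeminorm_zpow_le {V : Type*} [CommGroup V] (p : GroupSeminorm V) (a : V) (k : ℤ) :
    p (a ^ k) ≤ |(k : ℝ)| * p a := by
  let _ : SeminormedCommGroup V := p.toSeminormedCommGroup
  rw [← Int.norm_eq_abs]
  exact norm_zpow_le_mul_norm k a

theorem groupSeminorm_prod_zpow_le {V ι : Type*} [CommGroup V] [Fintype ι] (p : GroupSeminorm V)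
    (a : ι → V) (k : ι → ℤ) : p (∏ i, a i ^ k i) ≤ (∑ i, p (a i)) * ‖k‖ := by
  let _ : SeminormedCommGroup V := p.toSeminormedCommGroup
  have hprod : ‖∏ i, a i ^ k i‖ ≤ ∑ i, ‖a i ^ k i‖ := norm_prod_le _ _
  refine hprod.trans ?_
  rw [Finset.sum_mul]
  refine Finset.sum_le_sum fun i _ => (groupSeminorm_zpow_le p (a i) (k i)).trans ?_
  rw [mul_comm, ← Int.norm_eq_abs]
  exact mul_le_mul_of_nonneg_left (norm_le_pi_norm k i) (apply_nonneg p _)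

end Displacement

section MidpointMap

/-- A symmetric choice of midpoints that varies convexly with its arguments, such as
`σ · · (1 / 2)` for a reversible conical bicombing `σ`. -/
structure IsMidpointMap (m : X → X → X) : Prop where
  apply_self (x : X) : m x x = x
  comm (x y : X) : m x y = m y x
  dist_le (x y x' y' : X) : dist (m x y) (m x' y') ≤ (dist x x' + dist y y') / 2

theorem IsCCC.isMidpointMap {σ : X → X → ℝ → X} (hσ : IsCCC σ) (hrev : IsReversible σ) :
    IsMidpointMap fun x y => σ x y (1 / 2) where
  apply_self x := hσ.1.apply_self x ⟨by norm_num, by norm_num⟩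
  comm x y := by
    rw [hrev x y (1 / 2) ⟨by norm_num, by norm_num⟩]
    norm_num
  dist_le := hσ.2.2.dist_apply_half_le

theorem dist_iterate_iterate_le_of_commute {f g : X → X} (hf : LipschitzWith 1 f)
    (hg : LipschitzWith 1 g) (hfg : Function.Commute f g) (x : X) (N : ℕ) :
    dist (f^[N] x) (g^[N] x) ≤ N * dist (f x) (g x) := by
  induction N with
  | zero => simp
  | succ N ih =>
    have hf_le : dist (f (f^[N] x)) (f (g^[N] x)) ≤ dist (f^[N] x) (g^[N] x) := by
      simpa using hf.dist_le_mul (f^[N] x) (g^[N] x)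
    have hg_le : dist (f (g^[N] x)) (g (g^[N] x)) ≤ dist (f x) (g x) := by
      rw [← Function.iterate_succ_apply' g, Function.iterate_succ_apply g,
        hfg.iterate_right N x]
      simpa using (hg.iterate N).dist_le_mul (f x) (g x)
    rw [Function.iterate_succ_apply', Function.iterate_succ_apply']
    push_cast
    linarith [dist_triangle (f (f^[N] x)) (f (g^[N] x)) (g (g^[N] x))]

theorem half_sqrt_add_half_sqrt_le {a b : ℝ} (ha : 0 ≤ a) (hb : 0 ≤ b) :
    (√a + √b) / 2 ≤ √((a + b) / 2) := by
  refine Real.le_sqrt_of_sq_le ?_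
  have := add_sq_le (a := √a) (b := √b)
  rw [Real.sq_sqrt ha, Real.sq_sqrt hb] at this
  linarith

theorem le_of_forall_le_add_div_two_pow {a b c : ℝ} (h : ∀ N : ℕ, a ≤ b + c / 2 ^ N) : a ≤ b := by
  have hlim : Tendsto (fun N : ℕ => b + c / 2 ^ N) atTop (𝓝 (b + 0)) :=
    (tendsto_const_nhds.div_atTop (tendsto_pow_atTop_atTop_of_one_lt one_lt_two)).const_add b
  exact (ge_of_tendsto' hlim h).trans_eq (add_zero b)

/-- The midpoint of `b • x` and `b⁻¹ • x`. Its iterates perform a random walk along the orbit of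
the powers of `b`, and so drift only at the rate of a square root. -/
def twoPointMean {B : Type*} [Group B] [MulAction B X] (m : X → X → X) (b : B) (x : X) : X :=
  m (b • x) (b⁻¹ • x)

omit [MetricSpace X] in
theorem commute_twoPointMean_smul {B : Type*} [CommGroup B] [MulAction B X] {m : X → X → X}
    (hmB : ∀ (b : B) (x y : X), b • m x y = m (b • x) (b • y)) (b c : B) :
    Function.Commute (twoPointMean m b) (c • ·) := fun x => by
  simp only [twoPointMean, hmB, smul_comm c]

namespace IsMidpointMap

variable {m : X → X → X}

theorem exists_dist_apply_le_div_two_pow (hm : IsMidpointMap m) {Y : Set X}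
    (hY : ∀ x ∈ Y, ∀ y ∈ Y, m x y ∈ Y) (N : ℕ) {f : X → X} (hfY : MapsTo f Y Y)
    (hf : ∀ x y, f (m x y) = m (f x) (f y)) {x : X} (hx : x ∈ Y) :
    ∃ y ∈ Y, dist (f y) y ≤ dist (f^[2 ^ N] x) x / 2 ^ N := by
  induction N generalizing f with
  | zero => exact ⟨x, hx, by simp⟩
  | succ N ih =>
    obtain ⟨y, hy, hle⟩ := ih (hfY.comp hfY) (fun x y => by simp only [Function.comp_apply, hf])
    refine ⟨m y (f y), hY y hy _ (hfY hy), ?_⟩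
    have hhalf : dist (f (m y (f y))) (m y (f y)) ≤ dist (f (f y)) y / 2 := by
      rw [hf, hm.comm (f y)]
      simpa using hm.dist_le (f (f y)) (f y) y (f y)
    rw [pow_succ' 2 N, Function.iterate_mul, pow_succ, ← div_div]
    exact hhalf.trans (div_le_div_of_nonneg_right hle zero_le_two)

variable {B : Type*} [CommGroup B] [MulAction B X] [IsIsometricSMul B X]

theorem dist_smul_le_of_forall_mem (hm : IsMidpointMap m)
    (hmB : ∀ (b : B) (x y : X), b • m x y = m (b • x) (b • y)) {Y : Set X}
    (hY : ∀ x ∈ Y, ∀ y ∈ Y, m x y ∈ Y) (hYB : ∀ b : B, ∀ x ∈ Y, b • x ∈ Y) {o : X} (ho : o ∈ Y)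
    {R : ℝ} (hR : ∀ y ∈ Y, ∃ b : B, dist y (b • o) ≤ R) (b : B) (N : ℕ) :
    dist (b • o) o ≤ 2 * R + dist (b ^ 2 ^ N • o) o / 2 ^ N := by
  obtain ⟨y, hy, hle⟩ := hm.exists_dist_apply_le_div_two_pow hY N (hYB b) (hmB b) ho
  rw [smul_iterate] at hle
  obtain ⟨c, hc⟩ := hR y hy
  have hcomm : dist (b • o) o = dist (b • c • o) (c • o) := by
    rw [smul_comm, dist_smul]
  have htri := dist_triangle4 (b • c • o) (b • y) y (c • o)
  rw [dist_smul, dist_comm (c • o)] at htri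
  linarith

theorem lipschitzWith_twoPointMean (hm : IsMidpointMap m) (b : B) :
    LipschitzWith 1 (twoPointMean m b) := by
  refine .mk_one fun x y => (hm.dist_le _ _ _ _).trans ?_
  rw [dist_smul, dist_smul, add_self_div_two]

theorem dist_zpow_smul_iterate_twoPointMean_le (hm : IsMidpointMap m)
    (hmB : ∀ (b : B) (x y : X), b • m x y = m (b • x) (b • y)) (b : B) (o : X) (N : ℕ) (k : ℤ) :
    dist (b ^ k • (twoPointMean m b)^[N] o) o ≤ dist (b • o) o * √((k : ℝ) ^ 2 + N) := by
  induction N generalizing k with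
  | zero =>
    simpa [Real.sqrt_sq_eq_abs, mul_comm] using groupSeminorm_zpow_le (displacement B o) b k
  | succ N ih =>
    set y := (twoPointMean m b)^[N] o
    have hstep : b ^ k • (twoPointMean m b)^[N + 1] o = m (b ^ (k + 1) • y) (b ^ (k - 1) • y) := by
      rw [Function.iterate_succ_apply', twoPointMean, hmB, smul_smul, smul_smul, zpow_add_one,
        zpow_sub_one]
    have hconcave := half_sqrt_add_half_sqrt_le (a := ((k + 1 : ℤ) : ℝ) ^ 2 + N)
      (b := ((k - 1 : ℤ) : ℝ) ^ 2 + N) (by positivity) (by positivity)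
    calc dist (b ^ k • (twoPointMean m b)^[N + 1] o) o
        ≤ (dist (b ^ (k + 1) • y) o + dist (b ^ (k - 1) • y) o) / 2 := by
          rw [hstep]
          simpa only [hm.apply_self] using hm.dist_le (b ^ (k + 1) • y) (b ^ (k - 1) • y) o o
      _ ≤ dist (b • o) o * ((√(((k + 1 : ℤ) : ℝ) ^ 2 + N) + √(((k - 1 : ℤ) : ℝ) ^ 2 + N)) / 2) := by
          linarith [ih (k + 1), ih (k - 1)]
      _ ≤ dist (b • o) o * √((k : ℝ) ^ 2 + (N + 1 : ℕ)) := by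
          refine mul_le_mul_of_nonneg_left (hconcave.trans_eq ?_) dist_nonneg
          push_cast
          ring_nf

theorem dist_twoPointMean_le (hm : IsMidpointMap m)
    (hmB : ∀ (b : B) (x y : X), b • m x y = m (b • x) (b • y)) {Y : Set X}
    (hY : ∀ x ∈ Y, ∀ y ∈ Y, m x y ∈ Y) (hYB : ∀ b : B, ∀ x ∈ Y, b • x ∈ Y) {o : X} (ho : o ∈ Y)
    {R : ℝ} (hR : ∀ y ∈ Y, ∃ b : B, dist y (b • o) ≤ R) (b : B) :
    dist (twoPointMean m b o) o ≤ 4 * R := by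
  obtain ⟨c, hc⟩ := hR _ (hY _ (hYB b o ho) _ (hYB b⁻¹ o ho))
  suffices dist (c • o) o ≤ 3 * R by
    exact (dist_triangle _ (c • o) _).trans ((add_le_add hc this).trans_eq (by ring))
  refine le_of_forall_le_add_div_two_pow (c := dist (b • o) o) fun K => ?_
  have hpow : ((2 : ℝ) ^ (2 * K)) = 2 ^ K * 2 ^ K := by rw [two_mul, pow_add]
  have hwalk : dist ((twoPointMean m b)^[2 ^ (2 * K)] o) (c ^ 2 ^ (2 * K) • o) ≤
      2 ^ K * 2 ^ K * R := by
    have := dist_iterate_iterate_le_of_commute (hm.lipschitzWith_twoPointMean b)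
      (isometry_smul X c).lipschitz (commute_twoPointMean_smul hmB b c) o (2 ^ (2 * K))
    rw [smul_iterate] at this
    push_cast at this
    rw [hpow] at this
    exact this.trans (mul_le_mul_of_nonneg_left hc (by positivity))
  have hdrift : dist ((twoPointMean m b)^[2 ^ (2 * K)] o) o ≤ dist (b • o) o * 2 ^ K := by
    have := hm.dist_zpow_smul_iterate_twoPointMean_le hmB b o (2 ^ (2 * K)) 0
    rwa [zpow_zero, one_smul, Int.cast_zero, zero_pow two_ne_zero, zero_add, Nat.cast_pow,
      Nat.cast_ofNat, hpow, Real.sqrt_mul_self (by positivity)] at this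
  calc dist (c • o) o
      ≤ 2 * R + dist (c ^ 2 ^ (2 * K) • o) o / 2 ^ (2 * K) :=
        hm.dist_smul_le_of_forall_mem hmB hY hYB ho hR c (2 * K)
    _ ≤ 2 * R + (2 ^ K * 2 ^ K * R + dist (b • o) o * 2 ^ K) / (2 ^ K * 2 ^ K) := by
        rw [hpow]
        gcongr
        exact (dist_triangle_left _ _ _).trans (add_le_add hwalk hdrift)
    _ = 3 * R + dist (b • o) o / 2 ^ K := by
        field_simp
        ring

theorem dist_apply_smul_smul_le (hm : IsMidpointMap m)
    (hmB : ∀ (b : B) (x y : X), b • m x y = m (b • x) (b • y)) {Y : Set X}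
    (hY : ∀ x ∈ Y, ∀ y ∈ Y, m x y ∈ Y) (hYB : ∀ b : B, ∀ x ∈ Y, b • x ∈ Y) {o : X} (ho : o ∈ Y)
    {R : ℝ} (hR : ∀ y ∈ Y, ∃ b : B, dist y (b • o) ≤ R) {a b c : B} (habc : a * b = c * c) :
    dist (m (a • o) (b • o)) (c • o) ≤ 4 * R := by
  have hb : b = c * (c⁻¹ * a)⁻¹ := by
    rw [mul_inv_rev, inv_inv, mul_left_comm, ← habc, inv_mul_cancel_left]
  have ha : a = c * (c⁻¹ * a) := (mul_inv_cancel_left c a).symm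
  have hmean : m (a • o) (b • o) = c • twoPointMean m (c⁻¹ * a) o := by
    rw [twoPointMean, hmB, smul_smul, smul_smul, ← ha, ← hb]
  rw [hmean, dist_smul]
  exact hm.dist_twoPointMean_le hmB hY hYB ho hR _

end IsMidpointMap

end MidpointMap

section Centralizer

/-- Only finitely many group elements move `o` by at most a given distance, as for a proper
action. -/
def HasProperOrbit (G : Type*) [Group G] [MulAction G X] (o : X) : Prop :=
  ∀ r : ℝ, {g : G | dist (g • o) o ≤ r}.Finite

/-- The orbit of `o` is coarsely dense in the whole space, as for a cocompact action. -/
def HasCoboundedOrbit (G : Type*) [Group G] [MulAction G X] (o : X) : Prop :=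
  ∃ r : ℝ, ∀ x : X, ∃ g : G, dist x (g • o) ≤ r

/-- `G`-equivariance of a bicombing, whose values matter for parameters in `[0, 1]` only. -/
def IsEquivariant (G : Type*) [Group G] [MulAction G X] (σ : X → X → ℝ → X) : Prop :=
  ∀ (g : G) (x y : X), ∀ t ∈ Icc (0 : ℝ) 1, g • σ x y t = σ (g • x) (g • y) t

/-- The points that no element of `F` displaces further than it displaces `o`: a convex set on
which the centralizer of `F` acts. -/
def displacementSet {G : Type*} [Group G] [MulAction G X] (F : Set G) (o : X) : Set X :=
  {x | ∀ h ∈ F, dist (h • x) x ≤ dist (h • o) o}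

theorem exists_finite_forall_mul_inv_mem_centralizer {G : Type*} [Group G] {F E : Set G}
    (hF : F.Finite) (hE : E.Finite) : ∃ T : Set G, T.Finite ∧ ∀ g : G,
      (∀ h ∈ F, g⁻¹ * h * g ∈ E) → ∃ t ∈ T, g * t⁻¹ ∈ Subgroup.centralizer F := by
  have := hF.to_subtype
  let S : Set G := {g | ∀ h ∈ F, g⁻¹ * h * g ∈ E}
  let conj : G → F → G := fun g h => g⁻¹ * h * g
  have himage : (conj '' S).Finite := by
    refine (Set.Finite.pi' fun _ : F => hE).subset ?_
    rintro _ ⟨g, hg, rfl⟩ h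
    exact hg h h.2
  obtain ⟨T, -, hT⟩ := exists_subset_bijOn S conj
  refine ⟨T, hT.finite_iff_finite.2 himage, fun g hg => ?_⟩
  obtain ⟨t, ht, htg⟩ := hT.surjOn (mem_image_of_mem conj hg)
  refine ⟨t, ht, Subgroup.mem_centralizer_iff.2 fun h hh => ?_⟩
  have hconj : t⁻¹ * h * t = g⁻¹ * h * g := congrFun htg ⟨h, hh⟩
  calc h * (g * t⁻¹) = g * (g⁻¹ * h * g) * t⁻¹ := by group
    _ = g * t⁻¹ * h := by rw [← hconj]; group

variable {G : Type*} [Group G] [MulAction G X] {σ : X → X → ℝ → X} {o x y : X}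

theorem self_mem_displacementSet (F : Set G) (o : X) : o ∈ displacementSet F o :=
  fun _ _ => le_rfl

variable [IsIsometricSMul G X]

theorem smul_mem_displacementSet {F : Set G} {z : G} (hz : z ∈ Subgroup.centralizer F)
    (hx : x ∈ displacementSet F o) : z • x ∈ displacementSet F o := fun h hh => by
  rw [smul_smul, Subgroup.mem_centralizer_iff.1 hz h hh, mul_smul, dist_smul]
  exact hx h hh

omit [IsIsometricSMul G X] in
theorem apply_mem_displacementSet (hσ : IsConical σ) (hG : IsEquivariant G σ) {F : Set G}
    (hx : x ∈ displacementSet F o) (hy : y ∈ displacementSet F o) {t : ℝ}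
    (ht : t ∈ Icc (0 : ℝ) 1) : σ x y t ∈ displacementSet F o := fun h hh => by
  rw [hG h x y t ht]
  exact (hσ.dist_apply_le_max _ _ _ _ ht).trans (max_le (hx h hh) (hy h hh))

theorem exists_forall_displacementSet_dist_le (hprop : HasProperOrbit G o)
    (hcob : HasCoboundedOrbit G o) {F : Set G} (hF : F.Finite) :
    ∃ R : ℝ, ∀ x ∈ displacementSet F o, ∃ z ∈ Subgroup.centralizer F, dist x (z • o) ≤ R := by
  obtain ⟨r, hr⟩ := hcob
  obtain ⟨l, hl⟩ := (hF.image fun h => dist (h • o) o).bddAbove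
  obtain ⟨T, hT, hTF⟩ := exists_finite_forall_mul_inv_mem_centralizer hF (hprop (r + l + r))
  obtain ⟨M, hM⟩ := (hT.image fun t => dist o (t⁻¹ • o)).bddAbove
  refine ⟨r + M, fun x hx => ?_⟩
  obtain ⟨g, hg⟩ := hr x
  have hconj : ∀ h ∈ F, dist ((g⁻¹ * h * g) • o) o ≤ r + l + r := fun h hh =>
    calc dist ((g⁻¹ * h * g) • o) o = dist (h • g • o) (g • o) := by
          rw [smul_smul, dist_smul_smul_eq, mul_assoc]
      _ ≤ dist (h • g • o) (h • x) + dist (h • x) x + dist x (g • o) := dist_triangle4 _ _ _ _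
      _ ≤ r + l + r := by
          rw [dist_smul, dist_comm _ x]
          exact add_le_add_three hg ((hx h hh).trans (hl (mem_image_of_mem _ hh))) hg
  obtain ⟨t, ht, hz⟩ := hTF g hconj
  refine ⟨g * t⁻¹, hz, (dist_triangle x (g • o) _).trans (add_le_add hg ?_)⟩
  rw [mul_smul, dist_smul]
  exact hM (mem_image_of_mem _ ht)

theorem mem_closure_of_chain {H : Subgroup G} {R : ℝ} {p : ℕ → X} (h0 : p 0 = o)
    (hstep : ∀ i, dist (p i) (p (i + 1)) ≤ 1) (hnear : ∀ i, ∃ h ∈ H, dist (p i) (h • o) ≤ R)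
    (i : ℕ) {h : G} (hh : h ∈ H) (hi : dist (p i) (h • o) ≤ R) :
    h ∈ Subgroup.closure {h ∈ H | dist (h • o) o ≤ R + 1 + R} := by
  have hR : 0 ≤ R := dist_nonneg.trans hi
  induction i generalizing h with
  | zero =>
    refine Subgroup.subset_closure ⟨hh, ?_⟩
    rw [h0, dist_comm] at hi
    linarith
  | succ i ih =>
    obtain ⟨k, hk, hki⟩ := hnear i
    rw [← mul_inv_cancel_left k h]
    refine mul_mem (ih hk hki) (Subgroup.subset_closure ⟨mul_mem (inv_mem hk) hh, ?_⟩)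
    rw [← dist_smul_smul_eq]
    refine (dist_triangle4 (h • o) (p (i + 1)) (p i) (k • o)).trans (add_le_add_three ?_ ?_ hki)
    · rwa [dist_comm]
    · exact (dist_comm _ _).trans_le (hstep i)

theorem centralizer_fg (hσ : IsGeodesicBicombing σ) (hcon : IsConical σ) (hG : IsEquivariant G σ)
    (hprop : HasProperOrbit G o) (hcob : HasCoboundedOrbit G o) {F : Set G} (hF : F.Finite) :
    (Subgroup.centralizer F).FG := by
  obtain ⟨R, hR⟩ := exists_forall_displacementSet_dist_le hprop hcob hF
  rw [Subgroup.fg_iff]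
  refine ⟨{z ∈ Subgroup.centralizer F | dist (z • o) o ≤ R + 1 + R},
    le_antisymm ((Subgroup.closure_le _).2 fun z hz => hz.1) fun z hz => ?_,
    (hprop _).subset fun z hz => hz.2⟩
  obtain ⟨m, hm⟩ := exists_nat_gt (dist o (z • o))
  have hm0 : (0 : ℝ) < m := dist_nonneg.trans_lt hm
  have hmem (i : ℕ) : min ((i : ℝ) / m) 1 ∈ Icc (0 : ℝ) 1 :=
    ⟨le_min (by positivity) zero_le_one, min_le_right _ _⟩
  refine mem_closure_of_chain (p := fun i => σ o (z • o) (min ((i : ℝ) / m) 1)) ?_ (fun i => ?_)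
    (fun i => hR _ ?_) m hz ?_
  · simp [hσ.apply_zero]
  · rw [hσ.dist_apply_apply _ _ (hmem i) (hmem (i + 1))]
    have hclamp := abs_min_sub_min_le_max ((i : ℝ) / m) 1 ((i + 1 : ℕ) / m) 1
    have hdiff : |(i : ℝ) / m - (i + 1 : ℕ) / m| = 1 / m := by
      rw [← sub_div, abs_div, abs_of_pos hm0]
      simp
    rw [hdiff, sub_self, abs_zero, max_eq_left (by positivity)] at hclamp
    refine (mul_le_mul hclamp hm.le dist_nonneg (by positivity)).trans_eq ?_
    field_simp
  · exact apply_mem_displacementSet hcon hG (self_mem_displacementSet F o)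
      (smul_mem_displacementSet hz (self_mem_displacementSet F o)) (hmem i)
  · obtain ⟨w, -, hw⟩ := hR o (self_mem_displacementSet F o)
    simpa [div_self hm0.ne', hσ.apply_one] using dist_nonneg.trans hw

theorem isMulCommutative_centralizer_centralizer (A : Subgroup G) [IsMulCommutative A] :
    IsMulCommutative (Subgroup.centralizer (Subgroup.centralizer (A : Set G) : Set G)) := by
  rw [← Subgroup.le_centralizer_iff_isMulCommutative]
  refine Subgroup.centralizer_le ?_
  exact Subgroup.centralizer_le (Subgroup.le_centralizer A)

open IsMulCommutative in
theorem exists_forall_mem_dist_midpoint_smul_le (hσ : IsCCC σ) (hrev : IsReversible σ)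
    (hG : IsEquivariant G σ) (hprop : HasProperOrbit G o) (hcob : HasCoboundedOrbit G o)
    {A : Subgroup G} [IsMulCommutative A] (hA : A.FG) :
    ∃ R : ℝ, ∀ a ∈ A, ∀ b ∈ A, ∀ c ∈ A, a * b = c * c →
      dist (σ (a • o) (b • o) (1 / 2)) (c • o) ≤ R := by
  have hhalf : (1 / 2 : ℝ) ∈ Icc (0 : ℝ) 1 := ⟨by norm_num, by norm_num⟩
  have hCfg : (Subgroup.centralizer (A : Set G)).FG := by
    obtain ⟨S, rfl⟩ := hA
    rw [Subgroup.centralizer_closure]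
    exact centralizer_fg hσ.1 hσ.2.2 hG hprop hcob S.finite_toSet
  obtain ⟨T, hT⟩ := hCfg
  let B := Subgroup.centralizer (T : Set G)
  have hB : B = Subgroup.centralizer (Subgroup.centralizer (A : Set G) : Set G) := by
    rw [← hT, Subgroup.centralizer_closure]
  have hAB : A ≤ B := hB ▸ Subgroup.le_centralizer_iff.1 le_rfl
  have : IsMulCommutative B := hB ▸ isMulCommutative_centralizer_centralizer A
  have : IsIsometricSMul B X := ⟨fun b => isometry_smul X (b : G)⟩
  obtain ⟨R, hR⟩ := exists_forall_displacementSet_dist_le hprop hcob T.finite_toSet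
  refine ⟨4 * R, fun a ha b hb c hc habc => ?_⟩
  exact (hσ.isMidpointMap hrev).dist_apply_smul_smul_le (B := B)
    (fun g x y => hG g x y _ hhalf)
    (fun x hx y hy => apply_mem_displacementSet hσ.2.2 hG hx hy hhalf)
    (fun g x hx => smul_mem_displacementSet g.2 hx) (self_mem_displacementSet _ o)
    (fun y hy => let ⟨z, hz, hyz⟩ := hR y hy; ⟨⟨z, hz⟩, hyz⟩)
    (a := ⟨a, hAB ha⟩) (b := ⟨b, hAB hb⟩) (c := ⟨c, hAB hc⟩) (Subtype.ext habc)

end Centralizer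

section UniformlyProper

variable {E E' : Type*} [PseudoMetricSpace E] [PseudoMetricSpace E']

/-- Points with nearby images are nearby, uniformly: the metric form of properness that a coarse
embedding satisfies. -/
def UniformlyProper (f : E → E') : Prop :=
  ∀ r : ℝ, ∃ M : ℝ, ∀ x y, dist (f x) (f y) ≤ r → dist x y ≤ M

namespace UniformlyProper

theorem comp {E'' : Type*} [PseudoMetricSpace E''] {g : E' → E''} {f : E → E'}
    (hg : UniformlyProper g) (hf : UniformlyProper f) : UniformlyProper (g ∘ f) := fun r => by
  obtain ⟨M, hM⟩ := hg r
  obtain ⟨M', hM'⟩ := hf M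
  exact ⟨M', fun x y h => hM' x y (hM _ _ h)⟩

theorem of_dist_le {f g : E → E'} (hf : UniformlyProper f) {D : ℝ} (h : ∀ x, dist (g x) (f x) ≤ D) :
    UniformlyProper g := fun r => by
  obtain ⟨M, hM⟩ := hf (D + r + D)
  refine ⟨M, fun x y hxy => hM x y ((dist_triangle4 _ (g x) (g y) _).trans ?_)⟩
  exact add_le_add_three ((dist_comm _ _).trans_le (h x)) hxy (h y)

theorem of_antilipschitzWith {f : E → E'} {K : ℝ≥0} (hf : AntilipschitzWith K f) :
    UniformlyProper f := fun r =>
  ⟨K * r, fun x y h => (hf.le_mul_dist x y).trans (mul_le_mul_of_nonneg_left h K.2)⟩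

theorem isBounded_of_image {f : E → E'} (hf : UniformlyProper f) {s : Set E}
    (hs : Bornology.IsBounded (f '' s)) : Bornology.IsBounded s := by
  obtain ⟨r, hr⟩ := isBounded_iff.1 hs
  obtain ⟨M, hM⟩ := hf r
  exact isBounded_iff.2 ⟨M, fun x hx y hy =>
    hM x y (hr (mem_image_of_mem f hx) (mem_image_of_mem f hy))⟩

end UniformlyProper

end UniformlyProper

section Quasiflat

/-- A quasiflat for the bicombing `σ`: a coarsely Lipschitz, uniformly proper map of a normed space
that carries midpoints to within `R` of the midpoints selected by `σ`. -/
structure IsQuasiflat {E : Type*} [NormedAddCommGroup E] [NormedSpace ℝ E] (σ : X → X → ℝ → X)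
    (L : ℝ≥0) (C R : ℝ) (P : E → X) : Prop where
  dist_le (x y : E) : dist (P x) (P y) ≤ L * dist x y + C
  dist_midpoint_le (x y : E) : dist (σ (P x) (P y) (1 / 2)) (P (midpoint ℝ x y)) ≤ R
  uniformlyProper : UniformlyProper P

variable {ι : Type*} [Fintype ι] {σ : X → X → ℝ → X}

theorem IsQuasiflat.comp_continuousLinearEquiv {E E' : Type*} [NormedAddCommGroup E]
    [NormedSpace ℝ E] [NormedAddCommGroup E'] [NormedSpace ℝ E'] {L : ℝ≥0} {C R : ℝ} {P : E' → X}
    (hP : IsQuasiflat σ L C R P) (e : E ≃L[ℝ] E') :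
    IsQuasiflat σ (L * ‖(e : E →L[ℝ] E')‖₊) C R (P ∘ e) where
  dist_le x y := by
    refine (hP.dist_le (e x) (e y)).trans ?_
    rw [NNReal.coe_mul, mul_assoc]
    gcongr
    exact e.lipschitz.dist_le_mul x y
  dist_midpoint_le x y := by
    have hmid : e (midpoint ℝ x y) = midpoint ℝ (e x) (e y) :=
      e.toLinearEquiv.toAffineEquiv.map_midpoint x y
    simpa only [Function.comp_apply, hmid] using hP.dist_midpoint_le (e x) (e y)
  uniformlyProper := hP.uniformlyProper.comp (.of_antilipschitzWith e.antilipschitz)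

theorem dist_floor_comp_le (x y : ι → ℝ) :
    dist (fun i => ⌊x i⌋) (fun i => ⌊y i⌋) ≤ dist x y + 1 := by
  refine (dist_pi_le_iff (by positivity)).2 fun i => ?_
  have hi := abs_le.1 (dist_le_pi_dist x y i)
  rw [Int.dist_eq, abs_le]
  constructor <;>
    linarith [Int.floor_le (x i), Int.lt_floor_add_one (x i), Int.floor_le (y i),
      Int.lt_floor_add_one (y i), hi.1, hi.2]

theorem dist_le_dist_floor_comp_add_one (x y : ι → ℝ) :
    dist x y ≤ dist (fun i => ⌊x i⌋) (fun i => ⌊y i⌋) + 1 := by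
  refine (dist_pi_le_iff (by positivity)).2 fun i => ?_
  have hi := abs_le.1 (dist_le_pi_dist (fun i => ⌊x i⌋) (fun i => ⌊y i⌋) i)
  rw [Real.dist_eq, abs_le]
  constructor <;>
    linarith [Int.floor_le (x i), Int.lt_floor_add_one (x i), Int.floor_le (y i),
      Int.lt_floor_add_one (y i), hi.1, hi.2]

theorem abs_floor_add_floor_sub_two_mul_floor_midpoint_le (a b : ℝ) :
    |((⌊a⌋ + ⌊b⌋ - 2 * ⌊midpoint ℝ a b⌋ : ℤ) : ℝ)| ≤ 2 := by
  have hmid : midpoint ℝ a b = (a + b) / 2 := by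
    rw [midpoint_eq_smul_add, invOf_eq_inv, smul_eq_mul, inv_mul_eq_div]
  have hle := Int.floor_le (midpoint ℝ a b)
  have hlt := Int.lt_floor_add_one (midpoint ℝ a b)
  rw [hmid] at hle hlt ⊢
  push_cast
  rw [abs_le]
  constructor <;>
    linarith [Int.floor_le a, Int.lt_floor_add_one a, Int.floor_le b, Int.lt_floor_add_one b]

theorem isQuasiflat_comp_floor (hσ : IsConical σ) {L : ℝ≥0} {f : (ι → ℤ) → X}
    (hf : LipschitzWith L f) (hproper : UniformlyProper f) {R : ℝ}
    (hR : ∀ u v w, u + v = w + w → dist (σ (f u) (f v) (1 / 2)) (f w) ≤ R) :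
    IsQuasiflat σ L L (L + R) fun x : ι → ℝ => f fun i => ⌊x i⌋ where
  dist_le x y := by
    refine (hf.dist_le_mul _ _).trans ?_
    rw [← mul_add_one]
    exact mul_le_mul_of_nonneg_left (dist_floor_comp_le x y) L.2
  dist_midpoint_le x y := by
    set u : ι → ℤ := fun i => ⌊x i⌋
    set v : ι → ℤ := fun i => ⌊y i⌋
    set w : ι → ℤ := fun i => ⌊midpoint ℝ x y i⌋
    have hvw : dist v (w + w - u) ≤ 2 := by
      refine (dist_pi_le_iff zero_le_two).2 fun i => ?_
      have hcoord : v i - (w + w - u) i = ⌊x i⌋ + ⌊y i⌋ - 2 * ⌊midpoint ℝ (x i) (y i)⌋ := by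
        simp only [u, v, w, pi_midpoint_apply, Pi.add_apply, Pi.sub_apply]
        ring
      rw [Int.dist_eq, ← Int.cast_sub, hcoord]
      exact abs_floor_add_floor_sub_two_mul_floor_midpoint_le (x i) (y i)
    have hmove : dist (σ (f u) (f v) (1 / 2)) (σ (f u) (f (w + w - u)) (1 / 2)) ≤ L := by
      refine (hσ.dist_apply_left_le (f u) _ _ ⟨by norm_num, by norm_num⟩).trans ?_
      have := (hf.dist_le_mul v (w + w - u)).trans (mul_le_mul_of_nonneg_left hvw L.2)
      linarith
    exact (dist_triangle _ _ _).trans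
      (add_le_add hmove (hR u (w + w - u) w (add_sub_cancel _ _)))
  uniformlyProper := hproper.comp fun r =>
    ⟨r + 1, fun x y h => (dist_le_dist_floor_comp_add_one x y).trans (by gcongr)⟩

variable {G : Type*} [Group G] [MulAction G X] [IsIsometricSMul G X]

theorem exists_lipschitzWith_smul (φ : Multiplicative (ι → ℤ) →* G) (o : X) :
    ∃ L : ℝ≥0, LipschitzWith L fun v : ι → ℤ => φ (.ofAdd v) • o := by
  classical
  let p : GroupSeminorm (Multiplicative (ι → ℤ)) := (displacement G o).comp φ
  let e : ι → Multiplicative (ι → ℤ) := fun i => .ofAdd (Pi.single i 1)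
  have hprod (v : ι → ℤ) : ∏ i, e i ^ v i = .ofAdd v := by
    simp only [e, ← ofAdd_zsmul, ← ofAdd_sum]
    congr 1
    ext j
    simp [Finset.sum_apply, Pi.single_apply]
  refine ⟨⟨∑ i, p (e i), Finset.sum_nonneg fun i _ => apply_nonneg p _⟩,
    .of_dist_le_mul fun v w => ?_⟩
  rw [dist_smul_smul_eq, ← map_inv, ← map_mul, ← ofAdd_neg, ← ofAdd_add, neg_add_eq_sub,
    dist_eq_norm, ← hprod]
  exact groupSeminorm_prod_zpow_le p e (v - w)

theorem uniformlyProper_smul {o : X} (hprop : HasProperOrbit G o)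
    {φ : Multiplicative (ι → ℤ) →* G} (hφ : Function.Injective φ) :
    UniformlyProper fun v : ι → ℤ => φ (.ofAdd v) • o := fun r => by
  have hfin : {v : ι → ℤ | dist (φ (.ofAdd v) • o) o ≤ r}.Finite :=
    (hprop r).preimage (f := fun v => φ (.ofAdd v)) (hφ.comp Multiplicative.ofAdd.injective).injOn
  obtain ⟨M, hM⟩ := (hfin.image fun v => ‖v‖).bddAbove
  refine ⟨M, fun v w h => ?_⟩
  rw [dist_smul_smul_eq, ← map_inv, ← map_mul, ← ofAdd_neg, ← ofAdd_add, neg_add_eq_sub] at h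
  rw [dist_eq_norm]
  exact hM (mem_image_of_mem _ h)

end Quasiflat

section Straightening

theorem le_two_mul_of_apply_half_le {φ : ℝ → ℝ} {R : ℝ} (hbdd : BddAbove (φ '' Icc 0 1))
    (hleft : ∀ t ∈ Icc (0 : ℝ) 1, φ ((0 + t) / 2) ≤ φ t / 2 + R)
    (hright : ∀ t ∈ Icc (0 : ℝ) 1, φ ((t + 1) / 2) ≤ φ t / 2 + R) {t : ℝ}
    (ht : t ∈ Icc (0 : ℝ) 1) : φ t ≤ 2 * R := by
  have hle (s : ℝ) (hs : s ∈ Icc (0 : ℝ) 1) : φ s ≤ sSup (φ '' Icc 0 1) :=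
    le_csSup hbdd (mem_image_of_mem φ hs)
  have hsup : sSup (φ '' Icc 0 1) ≤ sSup (φ '' Icc 0 1) / 2 + R := by
    refine csSup_le ((nonempty_Icc.2 zero_le_one).image φ) ?_
    rintro _ ⟨s, hs, rfl⟩
    rcases le_total s (1 / 2) with h | h
    · have hmem : 2 * s ∈ Icc (0 : ℝ) 1 := ⟨by linarith [hs.1], by linarith⟩
      have := hleft _ hmem
      rw [zero_add, mul_div_cancel_left₀ s two_ne_zero] at this
      linarith [hle _ hmem]
    · have hmem : 2 * s - 1 ∈ Icc (0 : ℝ) 1 := ⟨by linarith, by linarith [hs.2]⟩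
      have := hright _ hmem
      rw [sub_add_cancel, mul_div_cancel_left₀ s two_ne_zero] at this
      linarith [hle _ hmem]
  linarith [hle t ht]

theorem tendsto_inv_natCast_add_one_mul (c : ℝ) :
    Tendsto (fun k : ℕ => ((k : ℝ) + 1)⁻¹ * c) atTop (𝓝 0) := by
  simpa using (tendsto_one_div_add_atTop_nhds_zero_nat (𝕜 := ℝ)).mul_const c

variable {E : Type*} [NormedAddCommGroup E] [NormedSpace ℝ E] {σ : X → X → ℝ → X} {L : ℝ≥0}
  {C R : ℝ} {P Q : E → X}

theorem IsConical.continuous_apply_left (h : IsConical σ) (o : X) {t : ℝ}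
    (ht : t ∈ Icc (0 : ℝ) 1) : Continuous fun x => σ o x t :=
  (LipschitzWith.mk_one fun x y => (h.dist_apply_left_le o x y ht).trans
    (mul_le_of_le_one_left dist_nonneg ht.2)).continuous

/-- The map `P` seen from far away: the rescaling by `r⁻¹` of `x ↦ P (r • x)`, where `X` is
contracted towards `P 0` along `σ`. -/
noncomputable def blowDown (σ : X → X → ℝ → X) (P : E → X) (r : ℝ) (x : E) : X :=
  σ (P 0) (P (r • x)) r⁻¹

/-- A map of a normed space that sends the segments from the origin to geodesics of `σ`. -/
structure IsRadialFlat (σ : X → X → ℝ → X) (L : ℝ≥0) (Q : E → X) : Prop where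
  lipschitz : LipschitzWith L Q
  apply_eq (x : E) {t : ℝ} (ht : t ∈ Icc (0 : ℝ) 1) : σ (Q 0) (Q x) t = Q (t • x)
  uniformlyProper : UniformlyProper Q

namespace IsQuasiflat

theorem dist_apply_lineMap_le (hP : IsQuasiflat σ L C R P) (hσ : IsCCC σ) (x y : E) {t : ℝ}
    (ht : t ∈ Icc (0 : ℝ) 1) :
    dist (σ (P x) (P y) t) (P (AffineMap.lineMap x y t)) ≤ 2 * R := by
  let φ : ℝ → ℝ := fun t => dist (σ (P x) (P y) t) (P (AffineMap.lineMap x y t))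
  have hmid (s u : ℝ) (hs : 0 ≤ s) (hsu : s ≤ u) (hu : u ≤ 1) :
      φ ((s + u) / 2) ≤ (φ s + φ u) / 2 + R := by
    have hline : AffineMap.lineMap x y ((s + u) / 2) =
        midpoint ℝ (AffineMap.lineMap x y s) (AffineMap.lineMap x y u) := by
      rw [← AffineMap.map_midpoint, midpoint_eq_smul_add, invOf_eq_inv, smul_eq_mul,
        inv_mul_eq_div]
    simp only [φ]
    rw [← hσ.2.1.apply_apply_half _ _ hs hsu hu, hline]
    exact (dist_triangle _ _ _).trans
      (add_le_add (hσ.2.2.dist_apply_half_le _ _ _ _) (hP.dist_midpoint_le _ _))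
  have hbdd : BddAbove (φ '' Icc 0 1) := by
    refine ⟨dist (P x) (P y) + (L * dist x y + C), ?_⟩
    rintro _ ⟨s, hs, rfl⟩
    refine (dist_triangle_left _ _ (P x)).trans (add_le_add ?_ ((hP.dist_le _ _).trans ?_))
    · rw [hσ.1.dist_left_apply _ _ hs]
      exact mul_le_of_le_one_left dist_nonneg hs.2
    · rw [dist_left_lineMap, Real.norm_of_nonneg hs.1]
      gcongr
      exact mul_le_of_le_one_left dist_nonneg hs.2
  have h0 : φ 0 = 0 := by simp [φ, hσ.1.apply_zero]
  have h1 : φ 1 = 0 := by simp [φ, hσ.1.apply_one]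
  exact le_two_mul_of_apply_half_le hbdd
    (fun s hs => (hmid 0 s le_rfl hs.1 hs.2).trans_eq (by rw [h0, zero_add]))
    (fun s hs => (hmid s 1 hs.1 hs.2 le_rfl).trans_eq (by rw [h1, add_zero])) ht

theorem dist_apply_mul_apply_smul_le (hP : IsQuasiflat σ L C R P) (hσ : IsCCC σ) (x : E) {s t : ℝ}
    (hs : s ∈ Icc (0 : ℝ) 1) (ht : t ∈ Icc (0 : ℝ) 1) :
    dist (σ (P 0) (P x) (s * t)) (σ (P 0) (P (t • x)) s) ≤ s * (2 * R) := by
  rw [← hσ.2.1.apply_apply_left hσ.1 _ _ hs ht]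
  refine (hσ.2.2.dist_apply_left_le _ _ _ hs).trans (mul_le_mul_of_nonneg_left ?_ hs.1)
  simpa [AffineMap.lineMap_apply] using hP.dist_apply_lineMap_le hσ 0 x ht

theorem dist_blowDown_blowDown_le (hP : IsQuasiflat σ L C R P) (hσ : IsCCC σ) (x : E) {r r' : ℝ}
    (hr : 1 ≤ r) (hrr' : r ≤ r') :
    dist (blowDown σ P r' x) (blowDown σ P r x) ≤ r⁻¹ * (2 * R) := by
  have hr0 : 0 < r := one_pos.trans_le hr
  have hr'0 : 0 < r' := hr0.trans_le hrr'
  have := hP.dist_apply_mul_apply_smul_le hσ (r' • x)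
    ⟨inv_nonneg.2 hr0.le, inv_le_one_of_one_le₀ hr⟩
    (t := r / r') ⟨by positivity, (div_le_one hr'0).2 hrr'⟩
  rwa [smul_smul, div_mul_cancel₀ r hr'0.ne', div_eq_mul_inv,
    inv_mul_cancel_left₀ hr0.ne'] at this

theorem dist_apply_blowDown_le (hP : IsQuasiflat σ L C R P) (hσ : IsCCC σ) (x : E) {r t : ℝ}
    (hr : 1 ≤ r) (ht : t ∈ Icc (0 : ℝ) 1) :
    dist (σ (P 0) (blowDown σ P r x) t) (blowDown σ P r (t • x)) ≤ r⁻¹ * (2 * R) := by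
  have hr' : r⁻¹ ∈ Icc (0 : ℝ) 1 :=
    ⟨inv_nonneg.2 (zero_le_one.trans hr), inv_le_one_of_one_le₀ hr⟩
  rw [blowDown, blowDown, hσ.2.1.apply_apply_left hσ.1 _ _ ht hr', mul_comm t, smul_comm r t]
  exact hP.dist_apply_mul_apply_smul_le hσ (r • x) hr' ht

theorem dist_blowDown_le (hP : IsQuasiflat σ L C R P) (hσ : IsConical σ) (x y : E) {r : ℝ}
    (hr : 1 ≤ r) : dist (blowDown σ P r x) (blowDown σ P r y) ≤ L * dist x y + r⁻¹ * C := by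
  have hr0 : 0 < r := one_pos.trans_le hr
  have hr' : r⁻¹ ∈ Icc (0 : ℝ) 1 := ⟨inv_nonneg.2 hr0.le, inv_le_one_of_one_le₀ hr⟩
  refine (hσ.dist_apply_left_le _ _ _ hr').trans
    ((mul_le_mul_of_nonneg_left (hP.dist_le _ _) hr'.1).trans_eq ?_)
  rw [dist_smul₀, Real.norm_of_nonneg hr0.le]
  field_simp

theorem exists_tendsto_blowDown [CompleteSpace X] (hP : IsQuasiflat σ L C R P) (hσ : IsCCC σ) :
    ∃ Q : E → X, ∀ x, Tendsto (fun k : ℕ => blowDown σ P (k + 1) x) atTop (𝓝 (Q x)) := by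
  suffices ∀ x, CauchySeq fun k : ℕ => blowDown σ P (k + 1) x by
    choose Q hQ using fun x => cauchySeq_tendsto_of_complete (this x)
    exact ⟨Q, hQ⟩
  intro x
  refine cauchySeq_of_le_tendsto_0' (fun k : ℕ => ((k : ℝ) + 1)⁻¹ * (2 * R)) (fun k l hkl => ?_)
    (tendsto_inv_natCast_add_one_mul _)
  rw [dist_comm]
  exact hP.dist_blowDown_blowDown_le hσ x (by simp) (by gcongr)

theorem dist_le_of_tendsto_blowDown (hP : IsQuasiflat σ L C R P) (hσ : IsCCC σ)
    (hQ : ∀ x, Tendsto (fun k : ℕ => blowDown σ P (k + 1) x) atTop (𝓝 (Q x))) (x : E) :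
    dist (Q x) (P x) ≤ 2 * R :=
  le_of_tendsto' ((hQ x).dist tendsto_const_nhds) fun k => by
    simpa [blowDown, hσ.1.apply_one] using
      hP.dist_blowDown_blowDown_le hσ x le_rfl (r' := (k : ℝ) + 1) (by simp)

theorem apply_zero_of_tendsto_blowDown (hσ : IsGeodesicBicombing σ)
    (hQ : ∀ x, Tendsto (fun k : ℕ => blowDown σ P (k + 1) x) atTop (𝓝 (Q x))) : Q 0 = P 0 := by
  refine tendsto_nhds_unique (hQ 0) (tendsto_const_nhds.congr fun k => ?_)
  rw [blowDown, smul_zero, hσ.apply_self _ ⟨by positivity, inv_le_one_of_one_le₀ (by simp)⟩]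

theorem isRadialFlat_of_tendsto_blowDown (hP : IsQuasiflat σ L C R P) (hσ : IsCCC σ)
    (hQ : ∀ x, Tendsto (fun k : ℕ => blowDown σ P (k + 1) x) atTop (𝓝 (Q x))) :
    IsRadialFlat σ L Q where
  lipschitz := .of_dist_le_mul fun x y => by
    have hlim : Tendsto (fun k : ℕ => L * dist x y + ((k : ℝ) + 1)⁻¹ * C) atTop
        (𝓝 (L * dist x y + 0)) := (tendsto_inv_natCast_add_one_mul C).const_add _
    rw [add_zero] at hlim
    exact le_of_tendsto_of_tendsto' ((hQ x).dist (hQ y)) hlim fun k =>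
      hP.dist_blowDown_le hσ.2.2 x y (by simp)
  apply_eq x t ht := by
    rw [apply_zero_of_tendsto_blowDown hσ.1 hQ]
    refine tendsto_nhds_unique ((tendsto_iff_of_dist ?_).1
      (((hσ.2.2.continuous_apply_left _ ht).tendsto _).comp (hQ x))) (hQ (t • x))
    exact squeeze_zero (fun _ => dist_nonneg)
      (fun k => hP.dist_apply_blowDown_le hσ x (by simp) ht) (tendsto_inv_natCast_add_one_mul _)
  uniformlyProper := hP.uniformlyProper.of_dist_le (hP.dist_le_of_tendsto_blowDown hσ hQ)

theorem exists_isRadialFlat [CompleteSpace X] (hP : IsQuasiflat σ L C R P) (hσ : IsCCC σ) :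
    ∃ Q : E → X, IsRadialFlat σ L Q ∧ Q 0 = P 0 ∧ ∀ x, dist (Q x) (P x) ≤ 2 * R := by
  obtain ⟨Q, hQ⟩ := hP.exists_tendsto_blowDown hσ
  exact ⟨Q, hP.isRadialFlat_of_tendsto_blowDown hσ hQ, apply_zero_of_tendsto_blowDown hσ.1 hQ,
    hP.dist_le_of_tendsto_blowDown hσ hQ⟩

end IsQuasiflat

end Straightening

section RadialFlat

variable {E : Type*} [NormedAddCommGroup E] [NormedSpace ℝ E] {σ : X → X → ℝ → X} {L : ℝ≥0}
  {Q : E → X} {x y z : E} {ζ : ℝ → X} {D : ℝ}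

/-- The image under `Q` of the ray from the origin through `y`, extended to `ℝ` by the convention
of `IsRay`. -/
def radialRay (Q : E → X) (y : E) (t : ℝ) : X := Q (max t 0 • y)

/-- The point of the ray from the origin through `x` that `Q` sends to distance `1` from `Q 0`. -/
noncomputable def unitRescale (Q : E → X) (x : E) : E := (dist (Q 0) (Q x))⁻¹ • x

omit [MetricSpace X] in
theorem radialRay_apply_of_nonneg (Q : E → X) (y : E) {t : ℝ} (ht : 0 ≤ t) :
    radialRay Q y t = Q (t • y) := by
  rw [radialRay, max_eq_left ht]

omit [MetricSpace X] in
theorem radialRay_zero (Q : E → X) (y : E) : radialRay Q y 0 = Q 0 := by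
  rw [radialRay_apply_of_nonneg Q y le_rfl, zero_smul]

namespace IsRadialFlat

theorem dist_zero_smul (hQ : IsRadialFlat σ L Q) (hσ : IsGeodesicBicombing σ) (x : E) {t : ℝ}
    (ht : 0 ≤ t) : dist (Q 0) (Q (t • x)) = t * dist (Q 0) (Q x) := by
  have hshrink (y : E) {s : ℝ} (hs : s ∈ Icc (0 : ℝ) 1) :
      dist (Q 0) (Q (s • y)) = s * dist (Q 0) (Q y) := by
    rw [← hQ.apply_eq y hs, hσ.dist_left_apply _ _ hs]
  rcases le_total t 1 with h | h
  · exact hshrink x ⟨ht, h⟩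
  · have ht0 : t ≠ 0 := (one_pos.trans_le h).ne'
    have := hshrink (t • x) ⟨inv_nonneg.2 ht, inv_le_one_of_one_le₀ h⟩
    rw [inv_smul_smul₀ ht0] at this
    rw [this, mul_inv_cancel_left₀ ht0]

theorem dist_smul_smul (hQ : IsRadialFlat σ L Q) (hσ : IsGeodesicBicombing σ) (x : E) {s t : ℝ}
    (hs : 0 ≤ s) (ht : 0 ≤ t) : dist (Q (s • x)) (Q (t • x)) = |s - t| * dist (Q 0) (Q x) := by
  wlog hst : s ≤ t generalizing s t
  · rw [dist_comm, this ht hs (le_of_not_ge hst), abs_sub_comm]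
  rcases ht.eq_or_lt with rfl | ht0
  · simp [le_antisymm hst hs]
  have hmem : s / t ∈ Icc (0 : ℝ) 1 := ⟨by positivity, (div_le_one ht0).2 hst⟩
  have := hσ.dist_apply_apply (Q 0) (Q (t • x)) hmem (right_mem_Icc.2 zero_le_one)
  rw [hσ.apply_one, hQ.apply_eq _ hmem, smul_smul, div_mul_cancel₀ s ht0.ne',
    hQ.dist_zero_smul hσ x ht, ← mul_assoc] at this
  rw [this, ← abs_of_pos ht0, ← abs_mul, abs_of_pos ht0, sub_mul, div_mul_cancel₀ s ht0.ne',
    one_mul]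

theorem eq_of_forall_apply_smul_eq (hQ : IsRadialFlat σ L Q)
    (h : ∀ t : ℝ, 0 ≤ t → Q (t • y) = Q (t • z)) : y = z := by
  obtain ⟨M, hM⟩ := hQ.uniformlyProper 0
  by_contra hyz
  obtain ⟨n, hn⟩ := Archimedean.arch (M + 1) (dist_pos.2 hyz)
  have := hM _ _ (dist_eq_zero.2 (h n n.cast_nonneg)).le
  rw [dist_smul₀, Real.norm_natCast, ← nsmul_eq_mul] at this
  linarith

theorem dist_zero_pos (hQ : IsRadialFlat σ L Q) (hσ : IsGeodesicBicombing σ) (hx : x ≠ 0) :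
    0 < dist (Q 0) (Q x) := by
  refine dist_nonneg.lt_of_ne' fun h => hx ?_
  refine (hQ.eq_of_forall_apply_smul_eq fun t ht => dist_eq_zero.1 ?_).symm
  rw [smul_zero, hQ.dist_zero_smul hσ x ht, h, mul_zero]

theorem isRay_radialRay (hQ : IsRadialFlat σ L Q) (hσ : IsGeodesicBicombing σ)
    (hy : dist (Q 0) (Q y) = 1) : IsRay σ (radialRay Q y) := by
  refine ⟨fun t ht => by rw [radialRay, radialRay, max_eq_right ht, max_self],
    fun s t hs ht => ?_, fun t ht s hs => ?_⟩
  · rw [radialRay_apply_of_nonneg Q y hs, radialRay_apply_of_nonneg Q y ht,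
      hQ.dist_smul_smul hσ y hs ht, hy, mul_one]
  · rw [radialRay_zero, radialRay_apply_of_nonneg Q y ht,
      radialRay_apply_of_nonneg Q y (mul_nonneg hs.1 ht), hQ.apply_eq _ hs, smul_smul]

theorem radialRay_injective (hQ : IsRadialFlat σ L Q) : Function.Injective (radialRay Q) :=
  fun y z h => hQ.eq_of_forall_apply_smul_eq fun t ht => by
    rw [← radialRay_apply_of_nonneg Q y ht, h, radialRay_apply_of_nonneg Q z ht]

theorem dO_radialRay_le (hQ : IsRadialFlat σ L Q) (o : X) (y z : E) :
    dO o (radialRay Q y) (radialRay Q z) ≤ 2 * (L * dist y z) := by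
  refine dO_le_two_mul fun t ht => ?_
  rw [radialRay_apply_of_nonneg Q y ht, radialRay_apply_of_nonneg Q z ht]
  refine (hQ.lipschitz.dist_le_mul _ _).trans_eq ?_
  rw [dist_smul₀, Real.norm_of_nonneg ht, mul_left_comm]

theorem dist_apply_smul_le_of_dist_le (hQ : IsRadialFlat σ L Q) (hσ : IsConical σ)
    (hζ : IsRay σ ζ) (h0 : ζ 0 = Q 0) {r t : ℝ} (ht : 0 ≤ t) (htr : t ≤ r) (hr : 0 < r)
    (hD : dist (ζ r) (Q x) ≤ D) : dist (ζ t) (Q ((t / r) • x)) ≤ t / r * D := by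
  have hmem : t / r ∈ Icc (0 : ℝ) 1 := ⟨by positivity, (div_le_one hr).2 htr⟩
  have hζt := hζ.apply_mul hmem hr.le
  rw [div_mul_cancel₀ t hr.ne', h0] at hζt
  rw [← hζt, ← hQ.apply_eq x hmem]
  exact (hσ.dist_apply_left_le _ _ _ hmem).trans (mul_le_mul_of_nonneg_left hD hmem.1)

theorem exists_tendsto_apply_smul (hQ : IsRadialFlat σ L Q) (hσ : IsConical σ)
    (hζ : IsRay σ ζ) (h0 : ζ 0 = Q 0) (hD : ∀ z, ∃ x, dist z (Q x) ≤ D) :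
    ∃ y : ℕ → E, ∀ t : ℝ, 0 ≤ t → Tendsto (fun k => Q (t • y k)) atTop (𝓝 (ζ t)) := by
  choose x hx using fun k : ℕ => hD (ζ (k + 1))
  refine ⟨fun k => ((k : ℝ) + 1)⁻¹ • x k, fun t ht => tendsto_iff_dist_tendsto_zero.2 ?_⟩
  refine squeeze_zero' (.of_forall fun _ => dist_nonneg) ?_
    (tendsto_inv_natCast_add_one_mul (t * D))
  filter_upwards [eventually_ge_atTop ⌈t⌉₊] with k hk
  have htk : t ≤ (k : ℝ) + 1 := (Nat.ceil_le.1 hk).trans (lt_add_one _).le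
  have := hQ.dist_apply_smul_le_of_dist_le hσ hζ h0 ht htk (by positivity) (hx k)
  rw [dist_comm, smul_smul, ← div_eq_mul_inv]
  exact this.trans_eq (by ring)

theorem exists_radialRay_eq [ProperSpace E] (hQ : IsRadialFlat σ L Q)
    (hσ : IsCCC σ) (hζ : IsRay σ ζ) (h0 : ζ 0 = Q 0) (hD : ∀ z, ∃ x, dist z (Q x) ≤ D) :
    ∃ y, dist (Q 0) (Q y) = 1 ∧ radialRay Q y = ζ := by
  obtain ⟨y, hy⟩ := hQ.exists_tendsto_apply_smul hσ.2.2 hζ h0 hD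
  have hy1 : Tendsto (fun k => Q (y k)) atTop (𝓝 (ζ 1)) := by simpa using hy 1 zero_le_one
  have hbdd : Bornology.IsBounded (range y) := hQ.uniformlyProper.isBounded_of_image <| by
    rw [← range_comp]
    exact isBounded_range_of_tendsto _ hy1
  obtain ⟨y₀, -, φ, hφ, hlim⟩ := tendsto_subseq_of_bounded hbdd (mem_range_self ·)
  have hy₀ (t : ℝ) (ht : 0 ≤ t) : Q (t • y₀) = ζ t :=
    tendsto_nhds_unique ((hQ.lipschitz.continuous.tendsto _).comp (hlim.const_smul t))
      ((hy t ht).comp hφ.tendsto_atTop)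
  have hdist : dist (Q 0) (Q y₀) = 1 := by
    have hQζ : Q y₀ = ζ 1 := by simpa using hy₀ 1 zero_le_one
    rw [hQζ, ← h0, hζ.dist_apply_apply le_rfl zero_le_one]
    norm_num
  refine ⟨y₀, hdist, (hQ.isRay_radialRay hσ.1 hdist).ext_of_forall_nonneg hζ fun t ht => ?_⟩
  rw [radialRay_apply_of_nonneg Q y₀ ht, hy₀ t ht]

theorem dist_zero_unitRescale (hQ : IsRadialFlat σ L Q) (hσ : IsGeodesicBicombing σ)
    (hx : x ≠ 0) : dist (Q 0) (Q (unitRescale Q x)) = 1 := by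
  rw [unitRescale, hQ.dist_zero_smul hσ _ (inv_nonneg.2 dist_nonneg),
    inv_mul_cancel₀ (hQ.dist_zero_pos hσ hx).ne']

theorem continuousOn_unitRescale (hQ : IsRadialFlat σ L Q) (hσ : IsGeodesicBicombing σ) :
    ContinuousOn (unitRescale Q) {0}ᶜ := by
  have hcont : Continuous fun x => dist (Q 0) (Q x) := continuous_const.dist hQ.lipschitz.continuous
  exact (hcont.continuousOn.inv₀ fun x hx => (hQ.dist_zero_pos hσ hx).ne').smul continuousOn_id

theorem bijOn_unitRescale (hQ : IsRadialFlat σ L Q) (hσ : IsGeodesicBicombing σ) :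
    BijOn (unitRescale Q) (sphere 0 1) {y | dist (Q 0) (Q y) = 1} := by
  refine ⟨fun v hv => hQ.dist_zero_unitRescale hσ (ne_zero_of_mem_unit_sphere ⟨v, hv⟩),
    fun v hv w hw h => ?_, fun y hy => ?_⟩
  · have hv0 := hQ.dist_zero_pos hσ (ne_zero_of_mem_unit_sphere ⟨v, hv⟩)
    have hnorm := congrArg norm h
    simp only [unitRescale, norm_smul, mem_sphere_zero_iff_norm.1 hv, mem_sphere_zero_iff_norm.1 hw,
      mul_one, norm_inv, Real.norm_of_nonneg dist_nonneg] at hnorm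
    rw [unitRescale, unitRescale, hnorm] at h
    exact smul_right_injective E (hnorm ▸ (inv_pos.2 hv0).ne') h
  · have hy0 : y ≠ 0 := by
      rintro rfl
      simp at hy
    have hscale : dist (Q 0) (Q (‖y‖⁻¹ • y)) = ‖y‖⁻¹ := by
      rw [hQ.dist_zero_smul hσ y (by positivity), hy, mul_one]
    refine ⟨‖y‖⁻¹ • y, ?_, ?_⟩
    · simpa using norm_smul_inv_norm (𝕜 := ℝ) hy0
    · rw [unitRescale, hscale, inv_inv, smul_inv_smul₀ (norm_ne_zero_iff.2 hy0)]

theorem exists_sphere_embedding (hQ : IsRadialFlat σ L Q) (hσ : IsCCC σ) :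
    ∃ F : sphere (0 : E) 1 → {ξ : ℝ → X // IsRay σ ξ ∧ ξ 0 = Q 0},
      Function.Injective F ∧
      (∀ v, ∀ ε : ℝ, 0 < ε → ∃ δ : ℝ, 0 < δ ∧ ∀ w, dist v w < δ → dO (Q 0) (F v).1 (F w).1 < ε) ∧
      (∀ [ProperSpace E] (D : ℝ), (∀ z, ∃ x, dist z (Q x) ≤ D) → Function.Surjective F) := by
  have hbij := hQ.bijOn_unitRescale hσ.1
  let F (v : sphere (0 : E) 1) : {ξ : ℝ → X // IsRay σ ξ ∧ ξ 0 = Q 0} :=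
    ⟨radialRay Q (unitRescale Q v), hQ.isRay_radialRay hσ.1 (hbij.mapsTo v.2), radialRay_zero Q _⟩
  refine ⟨F, fun v w h => ?_, fun v ε hε => ?_, fun D hD ζ => ?_⟩
  · exact Subtype.ext (hbij.injOn v.2 w.2 (hQ.radialRay_injective (congrArg Subtype.val h)))
  · have hcont : Continuous fun w : sphere (0 : E) 1 => unitRescale Q w :=
      (hQ.continuousOn_unitRescale hσ.1).comp_continuous continuous_subtype_val
        fun w => ne_zero_of_mem_unit_sphere w
    have hbound : Continuous fun w : sphere (0 : E) 1 =>
        2 * (L * dist (unitRescale Q v) (unitRescale Q w)) := by fun_prop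
    obtain ⟨δ, hδ, h⟩ := Metric.eventually_nhds_iff.1
      ((hbound.tendsto v).eventually_lt_const (u := ε) (by simpa using hε))
    exact ⟨δ, hδ, fun w hw => (hQ.dO_radialRay_le _ _ _).trans_lt (h (by rwa [dist_comm]))⟩
  · obtain ⟨y, hy, hyζ⟩ := hQ.exists_radialRay_eq hσ ζ.2.1 ζ.2.2 hD
    obtain ⟨v, hv, rfl⟩ := hbij.surjOn hy
    exact ⟨⟨v, hv⟩, Subtype.ext hyζ⟩

end IsRadialFlat

end RadialFlat

section GroupAction

variable {G : Type*} [Group G] [MulAction G X] {σ : X → X → ℝ → X} {o : X}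

theorem hasProperOrbit_of_forall_isCompact [ProperSpace X]
    (h : ∀ K : Set X, IsCompact K → {g : G | ((g • K) ∩ K).Nonempty}.Finite) (o : X) :
    HasProperOrbit G o := fun r =>
  (h _ ((isCompact_closedBall o r).insert o)).subset fun g hg =>
    ⟨g • o, smul_mem_smul_set (mem_insert o _), mem_insert_of_mem o hg⟩

variable [IsIsometricSMul G X]

theorem hasCoboundedOrbit_of_isBounded {K : Set X} (hK : Bornology.IsBounded K)
    (h : ∀ x : X, ∃ g : G, x ∈ g • K) (o : X) : HasCoboundedOrbit G o := by
  obtain ⟨r, hr⟩ := hK.subset_closedBall o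
  refine ⟨r, fun x => ?_⟩
  obtain ⟨g, k, hk, rfl⟩ := h x
  exact ⟨g, (dist_smul g k o).trans_le (hr hk)⟩

theorem HasCoboundedOrbit.subgroup (h : HasCoboundedOrbit G o) (A : Subgroup G) [A.FiniteIndex] :
    HasCoboundedOrbit A o := by
  obtain ⟨r, hr⟩ := h
  obtain ⟨M, hM⟩ := (finite_range fun q : G ⧸ A => dist o (q.out • o)).bddAbove
  refine ⟨r + M, fun x => ?_⟩
  obtain ⟨g, hg⟩ := hr x
  let q : G ⧸ A := (g⁻¹ : G)
  have hmem : g * q.out ∈ A := by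
    simpa using inv_mem (QuotientGroup.eq.1 (QuotientGroup.out_eq' q))
  refine ⟨⟨g * q.out, hmem⟩, (dist_triangle x (g • o) _).trans (add_le_add hg ?_)⟩
  rw [Subgroup.mk_smul, mul_smul, dist_smul]
  exact hM (mem_range_self q)

theorem exists_isQuasiflat_smul {ι : Type*} [Fintype ι] (hσ : IsCCC σ) (hrev : IsReversible σ)
    (hG : IsEquivariant G σ) (hprop : HasProperOrbit G o) (hcob : HasCoboundedOrbit G o)
    {φ : Multiplicative (ι → ℤ) →* G} (hφ : Function.Injective φ) :
    ∃ (L : ℝ≥0) (C R : ℝ), IsQuasiflat σ L C R fun x : ι → ℝ => φ (.ofAdd fun i => ⌊x i⌋) • o := by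
  have hfg : φ.range.FG := (Group.fg_iff_subgroup_fg _).1 inferInstance
  obtain ⟨R, hR⟩ := exists_forall_mem_dist_midpoint_smul_le hσ hrev hG hprop hcob hfg
  obtain ⟨L, hL⟩ := exists_lipschitzWith_smul φ o
  exact ⟨L, L, L + R, isQuasiflat_comp_floor hσ.2.2 hL (uniformlyProper_smul hprop hφ)
    fun u v w huvw => hR _ ⟨_, rfl⟩ _ ⟨_, rfl⟩ _ ⟨_, rfl⟩ <| by
      rw [← map_mul φ, ← map_mul φ, ← ofAdd_add, ← ofAdd_add, huvw]⟩

theorem exists_isRadialFlat_dist_smul_le {ι E : Type*} [Finite ι] [NormedAddCommGroup E]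
    [NormedSpace ℝ E] [CompleteSpace X] (e : E ≃L[ℝ] (ι → ℝ)) (hσ : IsCCC σ)
    (hrev : IsReversible σ) (hG : IsEquivariant G σ) (hprop : HasProperOrbit G o)
    (hcob : HasCoboundedOrbit G o) {φ : Multiplicative (ι → ℤ) →* G} (hφ : Function.Injective φ) :
    ∃ (L : ℝ≥0) (D : ℝ) (Q : E → X), IsRadialFlat σ L Q ∧ Q 0 = o ∧
      ∀ v, ∃ x, dist (φ v • o) (Q x) ≤ D := by
  cases nonempty_fintype ι
  obtain ⟨L, C, R, hP⟩ := exists_isQuasiflat_smul hσ hrev hG hprop hcob hφ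
  obtain ⟨Q, hQ, hQ0, hQP⟩ := (hP.comp_continuousLinearEquiv e).exists_isRadialFlat hσ
  refine ⟨_, 2 * R, Q, hQ, ?_, fun v => ⟨e.symm fun i => v.toAdd i, ?_⟩⟩
  · have h1 : Multiplicative.ofAdd (fun _ : ι => (0 : ℤ)) = 1 := rfl
    simp [hQ0, h1]
  · simpa [dist_comm] using hQP (e.symm fun i => v.toAdd i)

theorem sphere_in_boundary_general [CompleteSpace X] (hσ : IsCCC σ) (hrev : IsReversible σ)
    (hG : IsEquivariant G σ) (hprop : HasProperOrbit G o) (hcob : HasCoboundedOrbit G o)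
    {n : ℕ} {A : Subgroup G} (hA : Nonempty (A ≃* Multiplicative (Fin n → ℤ))) :
    (∀ ξ ζ θ : ℝ → X, IsRay σ ξ → IsRay σ ζ → IsRay σ θ →
        ξ 0 = o → ζ 0 = o → θ 0 = o →
        0 ≤ dO o ξ ζ ∧ (dO o ξ ζ = 0 ↔ ξ = ζ) ∧ dO o ξ ζ = dO o ζ ξ ∧
          dO o ξ θ ≤ dO o ξ ζ + dO o ζ θ) ∧
    ∃ F : sphere (0 : EuclideanSpace ℝ (Fin n)) 1 → {ξ : ℝ → X // IsRay σ ξ ∧ ξ 0 = o},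
      Function.Injective F ∧
      (∀ v, ∀ ε : ℝ, 0 < ε → ∃ δ : ℝ, 0 < δ ∧ ∀ w, dist v w < δ → dO o (F v).1 (F w).1 < ε) ∧
      (A.FiniteIndex → Function.Surjective F) := by
  refine ⟨fun ξ ζ θ hξ hζ _ hξ0 hζ0 _ => ⟨dO_nonneg o ξ ζ,
    hξ.dO_eq_zero_iff hζ (hξ0.trans hζ0.symm), dO_comm o ξ ζ, dO_triangle o ξ ζ θ⟩, ?_⟩
  obtain ⟨e⟩ := hA
  obtain ⟨L, D, Q, hQ, hQo, hdense⟩ := exists_isRadialFlat_dist_smul_le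
    (EuclideanSpace.equiv (Fin n) ℝ) hσ hrev hG hprop hcob (φ := A.subtype.comp e.symm)
    (A.subtype_injective.comp e.symm.injective)
  have hsphere := hQ.exists_sphere_embedding hσ
  rw [hQo] at hsphere
  obtain ⟨F, hinj, hcont, hsurj⟩ := hsphere
  refine ⟨F, hinj, hcont, fun hfin => ?_⟩
  obtain ⟨r, hr⟩ := hcob.subgroup A
  refine hsurj (r + D) fun z => ?_
  obtain ⟨a, ha⟩ := hr z
  obtain ⟨x, hx⟩ := hdense (e a)
  refine ⟨x, (dist_triangle z (a • o) _).trans (add_le_add ha ?_)⟩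
  simpa [Subgroup.smul_def] using hx

end GroupAction

/-- **Spheres in the boundary** (Proposition `sphereinbdry`): if a group `G` acts
geometrically on a proper metric space `X` with a ccc, reversible, `G`-equivariant
bicombing `σ` and contains a copy of `ℤⁿ`, then the boundary (the set of `σ`-rays
from a basepoint `o`, metrized by `d_o`, which is indeed a metric on this set)
contains a topologically embedded copy of `S^{n-1}`; moreover, if the copy of `ℤⁿ`
has finite index, the boundary is homeomorphic to `S^{n-1}`. -/
theorem sphere_in_boundary
    {G : Type*} [Group G] [MulAction G X] [ProperSpace X]
    (σ : X → X → ℝ → X) (hσ : IsCCC σ) (hrev : IsReversible σ)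
    (hiso : ∀ g : G, Isometry (fun x : X => g • x))
    (hequiv : ∀ (g : G) (x y : X), ∀ t ∈ Set.Icc (0 : ℝ) 1,
      g • σ x y t = σ (g • x) (g • y) t)
    (hproperact : ∀ K : Set X, IsCompact K → {g : G | ((g • K) ∩ K).Nonempty}.Finite)
    (hcocompact : ∃ K : Set X, IsCompact K ∧ ∀ x : X, ∃ g : G, x ∈ g • K)
    (n : ℕ) (hn : 1 ≤ n) (A : Subgroup G)
    (hA : Nonempty (A ≃* Multiplicative (Fin n → ℤ)))
    (o : X) :
    -- `d_o` is a metric on the set of σ-rays emanating from `o`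
    (∀ ξ ζ θ : ℝ → X, IsRay σ ξ → IsRay σ ζ → IsRay σ θ →
        ξ 0 = o → ζ 0 = o → θ 0 = o →
        0 ≤ dO o ξ ζ ∧ (dO o ξ ζ = 0 ↔ ξ = ζ) ∧ dO o ξ ζ = dO o ζ ξ ∧
          dO o ξ θ ≤ dO o ξ ζ + dO o ζ θ) ∧
    -- a topological embedding of the sphere `S^{n-1}`, surjective when `A` has finite index
    ∃ F : Metric.sphere (0 : EuclideanSpace ℝ (Fin n)) 1 →
        {ξ : ℝ → X // IsRay σ ξ ∧ ξ 0 = o},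
      Function.Injective F ∧
      (∀ v : Metric.sphere (0 : EuclideanSpace ℝ (Fin n)) 1, ∀ ε : ℝ, 0 < ε →
        ∃ δ : ℝ, 0 < δ ∧ ∀ w : Metric.sphere (0 : EuclideanSpace ℝ (Fin n)) 1,
          dist v w < δ → dO o (F v).1 (F w).1 < ε) ∧
      (A.FiniteIndex → Function.Surjective F) := by
  have : IsIsometricSMul G X := ⟨hiso⟩
  obtain ⟨K, hK, hKG⟩ := hcocompact
  exact sphere_in_boundary_general hσ hrev hequiv (hasProperOrbit_of_forall_isCompact hproperact o)
    (hasCoboundedOrbit_of_isBounded hK.isBounded hKG o) hA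
end
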